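/- Let X, Y ⊆ ω. There exists an embedding of pcas of B^X into G^Y if and only if X ⊕ X̄ is enumeration-reducible to Y, where X̄ is the complement of X. -/

import Mathlib

namespace PCAEmb

/-! ### Oracle computability -/

/-- Codes for partial functions computable relative to an oracle. -/
inductive OCode : Type
  | zero : OCode
  | succ : OCode
  | left : OCode
  | right : OCode
  | oracle : OCode
  | pair : OCode → OCode → OCode
  | comp : OCode → OCode → OCode
  | prec : OCode → OCode → OCode
  | rfind' : OCode → OCode

/-- Evaluation of an oracle code, relative to a (partial) oracle `O`. -/
def evalo (O : ℕ →. ℕ) : OCode → ℕ →. ℕ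
  | .zero => pure 0
  | .succ => Nat.succ
  | .left => ↑fun n : ℕ => n.unpair.1
  | .right => ↑fun n : ℕ => n.unpair.2
  | .oracle => O
  | .pair cf cg => fun n => Nat.pair <$> evalo O cf n <*> evalo O cg n
  | .comp cf cg => fun n => evalo O cg n >>= evalo O cf
  | .prec cf cg =>
      Nat.unpaired fun a n =>
        n.rec (evalo O cf a) fun y IH => do
          let i ← IH
          evalo O cg (Nat.pair a (Nat.pair y i))
  | .rfind' cf =>
      Nat.unpaired fun a m =>
        (Nat.rfind fun n => (fun x => x = 0) <$> evalo O cf (Nat.pair a (n + m))).map (· + m)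

/-- The standard numbering of oracle codes. -/
def OCode.ofNat : ℕ → OCode
  | 0 => .zero
  | 1 => .succ
  | 2 => .left
  | 3 => .right
  | 4 => .oracle
  | n + 5 =>
    match n % 4 with
    | 0 => .pair (OCode.ofNat (n / 4).unpair.1) (OCode.ofNat (n / 4).unpair.2)
    | 1 => .comp (OCode.ofNat (n / 4).unpair.1) (OCode.ofNat (n / 4).unpair.2)
    | 2 => .prec (OCode.ofNat (n / 4).unpair.1) (OCode.ofNat (n / 4).unpair.2)
    | _ => .rfind' (OCode.ofNat (n / 4).unpair.1)
  decreasing_by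
    all_goals
      have h1 := Nat.unpair_left_le (n / 4)
      have h2 := Nat.unpair_right_le (n / 4)
      have h3 := Nat.div_le_self n 4
      omega

/-- The `e`-th Turing functional with oracle `O` : `Φ_e^O`. -/
def phi (O : ℕ →. ℕ) (e : ℕ) : ℕ →. ℕ := evalo O (OCode.ofNat e)

/-- The characteristic function of a set of naturals, as a (total) partial function. -/
noncomputable def chi (X : Set ℕ) : ℕ →. ℕ :=
  fun n => Part.some (X.indicator (fun _ => 1) n)

/-- `ψ` is partial computable relative to the oracle `O`. -/
def RecursiveIn (O : ℕ →. ℕ) (ψ : ℕ →. ℕ) : Prop := ∃ c : OCode, evalo O c = ψ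

/-- Turing reducibility of sets of naturals. -/
def TuringLE (X Y : Set ℕ) : Prop := RecursiveIn (chi Y) (chi X)

/-- A total function `d : ℕ → ℕ` is `Y`-computable. -/
def ComputableIn (Y : Set ℕ) (d : ℕ → ℕ) : Prop :=
  RecursiveIn (chi Y) (fun n => Part.some (d n))

/-- A binary relation on `ℕ` is `Y`-c.e. -/
def CEIn (Y : Set ℕ) (R : ℕ → ℕ → Prop) : Prop :=
  ∃ c : OCode, ∀ n m, R n m ↔ (evalo (chi Y) c (Nat.pair n m)).Dom

/-- A set `W ⊆ ℕ` is `Y`-c.e. -/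
def CE1In (Y : Set ℕ) (W : Set ℕ) : Prop :=
  ∃ c : OCode, ∀ n, n ∈ W ↔ (evalo (chi Y) c n).Dom

/-- The canonical finite set `D_u` with code `u` (binary coding). -/
def Du (u : ℕ) : Set ℕ := {k | u.testBit k}

/-- Enumeration reducibility: `Z ≤ₑ Y`. -/
def EnumLE (Z Y : Set ℕ) : Prop :=
  ∃ W : Set ℕ, CE1In ∅ W ∧ ∀ x, x ∈ Z ↔ ∃ u, Nat.pair x u ∈ W ∧ Du u ⊆ Y

/-- The Turing jump `X'` of a set `X`. -/
def jump (X : Set ℕ) : Set ℕ := {e | (phi (chi X) e e).Dom}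

/-- The halting set `K = {e : φ_e(e)↓}`. -/
def Khalt : Set ℕ := jump ∅

/-! ### Partial combinatory algebras -/

/-- `k·a·b` as a partial element. -/
def app2 {α : Type*} (app : α → α → Part α) (a b c : α) : Part α :=
  (app a b).bind fun x => app x c

/-- `s·a·b·c` as a partial element. -/
def app3 {α : Type*} (app : α → α → Part α) (a b c d : α) : Part α :=
  (app2 app a b c).bind fun x => app x d

/-- A partial applicative structure is a pca if it has (distinct) combinators `s` and `k`. -/
def IsPCA {α : Type*} (app : α → α → Part α) : Prop :=
  ∃ s k : α, s ≠ k ∧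
    (∀ a b : α, app2 app k a b = Part.some a) ∧
    (∀ a b : α, (app2 app s a b).Dom) ∧
    (∀ a b c : α,
      app3 app s a b c = (app a c).bind fun x => (app b c).bind fun y => app x y)

/-- An embedding of partial combinatory algebras: an injection that preserves
(defined) application. -/
def IsPCAEmbedding {α β : Type*} (appA : α → α → Part α) (appB : β → β → Part β)
    (f : α → β) : Prop :=
  Function.Injective f ∧ ∀ a a' c : α, c ∈ appA a a' → f c ∈ appB (f a) (f a')

/-! ### Partial numberings -/

/-- `γ : ℕ ⇀ α` is a partial numbering (i.e. surjective). -/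
def IsNumbering {α : Type*} (γ : ℕ →. α) : Prop := ∀ a : α, ∃ n, a ∈ γ n

/-- `d` is an `(a⊥, a⊤)`-decider for `X` with respect to `γ`. -/
def IsDecider {α : Type*} (γ : ℕ →. α) (abot atop : α) (X : Set ℕ) (d : ℕ → ℕ) : Prop :=
  ∀ n, (n ∉ X → γ (d n) = Part.some abot) ∧ (n ∈ X → γ (d n) = Part.some atop)

/-- `γ` has `Y`-c.e. inequivalence. -/
def CEInequiv {α : Type*} (Y : Set ℕ) (γ : ℕ →. α) : Prop :=
  ∃ R : ℕ → ℕ → Prop, CEIn Y R ∧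
    ∀ n m, (γ n).Dom → (γ m).Dom → (R n m ↔ γ n ≠ γ m)

/-- `γ` is a `Y`-effectively pca-valued partial numbering: the application is
represented on codes by a partial `Y`-computable function `ψ`. -/
def EffValued {α : Type*} (Y : Set ℕ) (app : α → α → Part α) (γ : ℕ →. α) : Prop :=
  ∃ ψ : ℕ →. ℕ, RecursiveIn (chi Y) ψ ∧
    ∀ (n m : ℕ) (a b c : α), a ∈ γ n → b ∈ γ m → c ∈ app a b →
      ∃ j, j ∈ ψ (Nat.pair n m) ∧ c ∈ γ j

/-- `γ` is a strongly `Y`-effectively pca-valued partial numbering. -/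
def StrongEffValued {α : Type*} (Y : Set ℕ) (app : α → α → Part α) (γ : ℕ →. α) : Prop :=
  ∃ ψ : ℕ →. ℕ, RecursiveIn (chi Y) ψ ∧
    (∀ (n m : ℕ) (a b c : α), a ∈ γ n → b ∈ γ m → c ∈ app a b →
      ∃ j, j ∈ ψ (Nat.pair n m) ∧ c ∈ γ j) ∧
    (∀ (n m k l : ℕ) (a b a' b' c : α), a ∈ γ n → b ∈ γ m → a' ∈ γ k → b' ∈ γ l →
      c ∈ app a b → c ∈ app a' b' → ψ (Nat.pair n m) = ψ (Nat.pair k l))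

/-! ### The models -/

/-- Kleene's first model relativized to `X`: application `n · m = Φ_n^X(m)`. -/
noncomputable def k1App (X : Set ℕ) : ℕ → ℕ → Part ℕ := fun n m => phi (chi X) n m

/-- A total function as a partial function. -/
def toPFun (g : ℕ → ℕ) : ℕ →. ℕ := fun n => Part.some (g n)

/-- Join `f ⊕ g` of two partial functions. -/
def pjoin (f g : ℕ →. ℕ) : ℕ →. ℕ := fun n =>
  if n % 2 = 0 then f (n / 2) else g (n / 2)

/-- The totalization of a partial function, as a partial element of `ℕ → ℕ`:
defined iff `ψ` is total. -/
def partToTotal (ψ : ℕ →. ℕ) : Part (ℕ → ℕ) :=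
  ⟨∀ n, (ψ n).Dom, fun H n => (ψ n).get (H n)⟩

/-- Application in Kleene's second model `K₂`: `g · h = Φ^{g⊕h}_{g 0}`,
defined iff this function is total. -/
def k2App (g h : ℕ → ℕ) : Part (ℕ → ℕ) :=
  partToTotal (phi (pjoin (toPFun g) (toPFun h)) (g 0))

/-- Application in van Oosten's sequential model `B`: `θ · ρ = Φ^{θ⊕ρ}_{θ 0}`
(always defined, as a partial function). -/
def bApp (θ ρ : ℕ →. ℕ) : Part (ℕ →. ℕ) :=
  Part.some (fun n => (θ 0).bind fun e => phi (pjoin θ ρ) e n)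

/-- Restriction of a partial applicative structure to a subset. -/
def subApp {α : Type*} (app : α → α → Part α) (P : α → Prop)
    (a b : Subtype P) : Part (Subtype P) :=
  (app a.1 b.1).bind fun c => Part.assert (P c) fun h => Part.some ⟨c, h⟩

/-- Carrier of `K₂^X` : the total `X`-computable functions. -/
def K2el (X : Set ℕ) : Type := {g : ℕ → ℕ // RecursiveIn (chi X) (toPFun g)}

/-- Application in `K₂^X`. -/
def k2XApp (X : Set ℕ) : K2el X → K2el X → Part (K2el X) :=
  subApp k2App _

/-- Carrier of `B^X` : the partial `X`-computable functions. -/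
def Bel (X : Set ℕ) : Type := {θ : ℕ →. ℕ // RecursiveIn (chi X) θ}

/-- Application in `B^X`. -/
def bXApp (X : Set ℕ) : Bel X → Bel X → Part (Bel X) :=
  subApp bApp _

/-- Application in Scott's graph model `G`. -/
def gApp (A B : Set ℕ) : Part (Set ℕ) :=
  Part.some {n | ∃ u, Nat.pair n u ∈ A ∧ Du u ⊆ B}

/-- Carrier of `G^Z` : the sets enumeration-reducible to `Z`. -/
def Gel (Z : Set ℕ) : Type := {A : Set ℕ // EnumLE A Z}

/-- Application in `G^Z`. -/
def gXApp (Z : Set ℕ) : Gel Z → Gel Z → Part (Gel Z) :=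
  subApp gApp _

/-- `X ⊕ X̄ = {2n : n ∈ X} ∪ {2n+1 : n ∉ X}`. -/
def joinCompl (X : Set ℕ) : Set ℕ :=
  {k | ∃ n, (k = 2 * n ∧ n ∈ X) ∨ (k = 2 * n + 1 ∧ n ∉ X)}

/-! ### The λ-calculus -/

/-- Untyped λ-terms (de Bruijn representation). -/
inductive Lam : Type
  | var : ℕ → Lam
  | app : Lam → Lam → Lam
  | abs : Lam → Lam

/-- Lift (shift up) the free variables `≥ d` of a term. -/
def Lam.lift : Lam → ℕ → Lam
  | .var n, d => if n < d then .var n else .var (n + 1)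
  | .app M N, d => .app (M.lift d) (N.lift d)
  | .abs M, d => .abs (M.lift (d + 1))

/-- Substitution `M[k := N]` (de Bruijn). -/
def Lam.subst : Lam → ℕ → Lam → Lam
  | .var n, k, N => if n = k then N else if k < n then .var (n - 1) else .var n
  | .app M M', k, N => .app (M.subst k N) (M'.subst k N)
  | .abs M, k, N => .abs (M.subst (k + 1) (N.lift 0))

/-- β-equivalence of λ-terms. -/
inductive BetaEq : Lam → Lam → Prop
  | beta (M N : Lam) : BetaEq (.app (.abs M) N) (M.subst 0 N)
  | refl (M : Lam) : BetaEq M M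
  | symm {M N : Lam} : BetaEq M N → BetaEq N M
  | trans {M N P : Lam} : BetaEq M N → BetaEq N P → BetaEq M P
  | appCongr {M M' N N' : Lam} :
      BetaEq M M' → BetaEq N N' → BetaEq (.app M N) (.app M' N')
  | absCongr {M M' : Lam} : BetaEq M M' → BetaEq (.abs M) (.abs M')

/-- βη-equivalence of λ-terms. -/
inductive BetaEtaEq : Lam → Lam → Prop
  | beta (M N : Lam) : BetaEtaEq (.app (.abs M) N) (M.subst 0 N)
  | eta (M : Lam) : BetaEtaEq (.abs (.app (M.lift 0) (.var 0))) M
  | refl (M : Lam) : BetaEtaEq M M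
  | symm {M N : Lam} : BetaEtaEq M N → BetaEtaEq N M
  | trans {M N P : Lam} : BetaEtaEq M N → BetaEtaEq N P → BetaEtaEq M P
  | appCongr {M M' N N' : Lam} :
      BetaEtaEq M M' → BetaEtaEq N N' → BetaEtaEq (.app M N) (.app M' N')
  | absCongr {M M' : Lam} : BetaEtaEq M M' → BetaEtaEq (.abs M) (.abs M')

def lamBetaSetoid : Setoid Lam := ⟨BetaEq, ⟨BetaEq.refl, BetaEq.symm, BetaEq.trans⟩⟩

def lamBetaEtaSetoid : Setoid Lam :=
  ⟨BetaEtaEq, ⟨BetaEtaEq.refl, BetaEtaEq.symm, BetaEtaEq.trans⟩⟩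

/-- The pca `λ` of λ-terms modulo β-equivalence. -/
def LamBeta : Type := Quotient lamBetaSetoid

/-- The pca `λη` of λ-terms modulo βη-equivalence. -/
def LamBetaEta : Type := Quotient lamBetaEtaSetoid

/-- Application in `λ` (total). -/
def lamBetaApp : LamBeta → LamBeta → Part LamBeta := fun a b =>
  Part.some (Quotient.map₂ Lam.app (fun _ _ h1 _ _ h2 => BetaEq.appCongr h1 h2) a b)

/-- Application in `λη` (total). -/
def lamBetaEtaApp : LamBetaEta → LamBetaEta → Part LamBetaEta := fun a b =>
  Part.some (Quotient.map₂ Lam.app (fun _ _ h1 _ _ h2 => BetaEtaEq.appCongr h1 h2) a b)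

section P1s
/-! ### Enumerability relative to `Y` -/

theorem primrecPred_testBit : PrimrecRel (fun u k : ℕ => u.testBit k = true) := by
  have hp : Primrec₂ (fun a b : ℕ => a ^ b) := Primrec₂.unpaired'.1 Nat.Primrec.pow
  refine PrimrecRel.of_eq (r := fun u k : ℕ => u / 2 ^ k % 2 = 1) ?_ ?_
  · exact Primrec.eq.comp
      (Primrec.nat_mod.comp (Primrec.nat_div.comp Primrec.fst
        (hp.comp (Primrec.const 2) Primrec.snd)) (Primrec.const 2)) (Primrec.const 1)
  · intro u k
    simp [Nat.testBit_eq_decide_div_mod_eq]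

/-- The list of elements of `Du u`. -/
def bits (u : ℕ) : List ℕ := (List.range u).filter fun k => u.testBit k = true

theorem mem_bits {u k : ℕ} : k ∈ bits u ↔ u.testBit k = true := by
  unfold bits
  simp only [List.mem_filter, List.mem_range, decide_eq_true_eq, and_iff_right_iff_imp]
  intro h
  exact (Nat.lt_two_pow_self).trans_le (Nat.ge_two_pow_of_testBit h)

theorem Du_subset_iff {u : ℕ} {Y : Set ℕ} : Du u ⊆ Y ↔ ∀ k ∈ bits u, k ∈ Y := by
  simp only [mem_bits]; rfl

theorem primrec_bits : Primrec bits := by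
  have h : PrimrecRel (fun k u : ℕ => u.testBit k = true) :=
    primrecPred_testBit.comp Primrec.snd Primrec.fst
  exact (PrimrecRel.listFilter h).comp Primrec.list_range Primrec.id

theorem exists_bits (l : List ℕ) : ∃ u, ∀ k, k ∈ bits u ↔ k ∈ l := by
  induction l with
  | nil => exact ⟨0, by simp [mem_bits]⟩
  | cons a l ih =>
    obtain ⟨u, hu⟩ := ih
    refine ⟨u ||| 2 ^ a, fun k => ?_⟩
    have := hu k
    rw [mem_bits] at this ⊢
    simp only [Nat.testBit_or, Bool.or_eq_true, this, Nat.testBit_two_pow, decide_eq_true_eq,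
      List.mem_cons]
    tauto

/-- `P` is enumerable relative to (positive information about) `Y`. -/
def EP (Y : Set ℕ) {α : Type} [Primcodable α] (P : α → Prop) : Prop :=
  ∃ (τ : Type) (_ : Primcodable τ) (R : α × List ℕ × τ → Prop), PrimrecPred R ∧
    ∀ a, P a ↔ ∃ l t, R (a, l, t) ∧ ∀ k ∈ l, k ∈ Y

section
variable {Y : Set ℕ} {α β : Type} [Primcodable α] [Primcodable β]

theorem EP.of_iff {P Q : α → Prop} (h : EP Y P) (H : ∀ a, P a ↔ Q a) : EP Y Q := by
  obtain ⟨τ, i, R, hR, h⟩ := h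
  exact ⟨τ, i, R, hR, fun a => (H a).symm.trans (h a)⟩

theorem EP.of_prim {P : α → Prop} (h : PrimrecPred P) : EP Y P := by
  refine ⟨Unit, inferInstance, fun z => P z.1 ∧ z.2.1 = [], ?_, ?_⟩
  · exact (h.comp Primrec.fst).and
      (Primrec.eq.comp (Primrec.fst.comp Primrec.snd) (Primrec.const []))
  · intro a
    constructor
    · intro h; exact ⟨[], (), ⟨h, rfl⟩, by simp⟩
    · rintro ⟨l, t, h, -⟩; exact h.1

theorem EP.comp {P : β → Prop} (h : EP Y P) {f : α → β} (hf : Primrec f) :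
    EP Y (fun a => P (f a)) := by
  obtain ⟨τ, i, R, hR, h⟩ := h
  refine ⟨τ, i, fun z => R (f z.1, z.2), ?_, fun a => h (f a)⟩
  exact hR.comp ((hf.comp Primrec.fst).pair Primrec.snd)

theorem EP.exists {P : α × β → Prop} (h : EP Y P) : EP Y (fun a => ∃ b, P (a, b)) := by
  obtain ⟨τ, i, R, hR, h⟩ := h
  refine ⟨β × τ, inferInstance, fun z => R ((z.1, z.2.2.1), z.2.1, z.2.2.2), ?_, fun a => ?_⟩
  · refine hR.comp (Primrec.pair (Primrec.pair Primrec.fst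
      (Primrec.fst.comp (Primrec.snd.comp Primrec.snd))) (Primrec.pair
      (Primrec.fst.comp Primrec.snd) (Primrec.snd.comp (Primrec.snd.comp Primrec.snd))))
  · simp only [h]
    constructor
    · rintro ⟨b, l, t, h1, h2⟩; exact ⟨l, (b, t), h1, h2⟩
    · rintro ⟨l, ⟨b, t⟩, h1, h2⟩; exact ⟨b, l, t, h1, h2⟩

theorem EP.and {P Q : α → Prop} (hP : EP Y P) (hQ : EP Y Q) : EP Y (fun a => P a ∧ Q a) := by
  obtain ⟨τ, i, R, hR, h⟩ := hP
  obtain ⟨τ', i', R', hR', h'⟩ := hQ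
  refine ⟨(List ℕ × τ) × (List ℕ × τ'), inferInstance,
    fun z => (R (z.1, z.2.2.1) ∧ R' (z.1, z.2.2.2)) ∧ z.2.1 = z.2.2.1.1 ++ z.2.2.2.1, ?_,
    fun a => ?_⟩
  · have s2 : Primrec (fun z : α × List ℕ × (List ℕ × τ) × (List ℕ × τ') => z.2.2) :=
      Primrec.snd.comp Primrec.snd
    refine ((hR.comp (Primrec.pair Primrec.fst (Primrec.fst.comp s2))).and
      (hR'.comp (Primrec.pair Primrec.fst (Primrec.snd.comp s2)))).and
      (Primrec.eq.comp (Primrec.fst.comp Primrec.snd)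
        (Primrec.list_append.comp (Primrec.fst.comp (Primrec.fst.comp s2))
          (Primrec.fst.comp (Primrec.snd.comp s2))))
  · show (P a ∧ Q a) ↔ _
    rw [h, h']
    constructor
    · rintro ⟨⟨l, t, h1, h2⟩, ⟨l', t', h1', h2'⟩⟩
      refine ⟨l ++ l', ((l, t), (l', t')), ⟨⟨h1, h1'⟩, rfl⟩, ?_⟩
      intro k hk
      rcases List.mem_append.1 hk with hk | hk
      · exact h2 k hk
      · exact h2' k hk
    · rintro ⟨m, ⟨⟨l, t⟩, ⟨l', t'⟩⟩, ⟨⟨h1, h1'⟩, hm⟩, h2⟩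
      simp only at hm h1 h1'
      subst hm
      exact ⟨⟨l, t, h1, fun k hk => h2 k (List.mem_append_left _ hk)⟩,
        ⟨l', t', h1', fun k hk => h2 k (List.mem_append_right _ hk)⟩⟩

theorem EP.or {P Q : α → Prop} (hP : EP Y P) (hQ : EP Y Q) : EP Y (fun a => P a ∨ Q a) := by
  classical
  obtain ⟨τ, i, R, hR, h⟩ := hP
  obtain ⟨τ', i', R', hR', h'⟩ := hQ
  have key : Primrec (fun z : α × List ℕ × (τ ⊕ τ') =>
      (Sum.casesOn z.2.2 (fun t => decide (R (z.1, z.2.1, t)))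
        (fun t => decide (R' (z.1, z.2.1, t))) : Bool)) := by
    refine Primrec.sumCasesOn (Primrec.snd.comp Primrec.snd) ?_ ?_
    · exact hR.decide.comp (Primrec.pair (Primrec.fst.comp Primrec.fst)
        (Primrec.pair (Primrec.fst.comp (Primrec.snd.comp Primrec.fst)) Primrec.snd))
    · exact hR'.decide.comp (Primrec.pair (Primrec.fst.comp Primrec.fst)
        (Primrec.pair (Primrec.fst.comp (Primrec.snd.comp Primrec.fst)) Primrec.snd))
  refine ⟨τ ⊕ τ', inferInstance, _, Primrec.eq.comp key (Primrec.const true), fun a => ?_⟩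
  show (P a ∨ Q a) ↔ _
  rw [h, h']
  constructor
  · rintro (⟨l, t, h1, h2⟩ | ⟨l, t, h1, h2⟩)
    · exact ⟨l, Sum.inl t, by simpa using h1, h2⟩
    · exact ⟨l, Sum.inr t, by simpa using h1, h2⟩
  · rintro ⟨l, t | t, h1, h2⟩
    · exact Or.inl ⟨l, t, by simpa using h1, h2⟩
    · exact Or.inr ⟨l, t, by simpa using h1, h2⟩

theorem EP.rule {ζ : Type} [Primcodable ζ] {c : ζ → Prop} (hc : EP Y c)
    {ps : ζ → List α} {co : ζ → α} (hps : Primrec ps) (hco : Primrec co) :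
    EP Y (fun q : List α × α => ∃ z, c z ∧ q.1 = ps z ∧ q.2 = co z) := by
  refine EP.exists (P := fun w : (List α × α) × ζ => c w.2 ∧ w.1.1 = ps w.2 ∧ w.1.2 = co w.2)
    ((hc.comp Primrec.snd).and ((EP.of_prim ?_).and (EP.of_prim ?_)))
  · exact Primrec.eq.comp (Primrec.fst.comp Primrec.fst) (hps.comp Primrec.snd)
  · exact Primrec.eq.comp (Primrec.snd.comp Primrec.fst) (hco.comp Primrec.snd)

/-- The least predicate closed under the finitary rules `Rl`. -/
inductive Clo {α : Type} (Rl : List α × α → Prop) : α → Prop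
  | mk (ps : List α) (a : α) : Rl (ps, a) → (∀ p ∈ ps, Clo Rl p) → Clo Rl a

open Classical in
/-- One step of running a derivation. -/
noncomputable def dstep {α τ : Type} (R : (List α × α) × List ℕ × τ → Prop)
    (i : (List α × α) × List ℕ × τ) (s : List α × List ℕ) : List α × List ℕ :=
  if R i ∧ ∀ p ∈ i.1.1, p ∈ s.1 then (i.1.2 :: s.1, i.2.1 ++ s.2) else s

/-- Running a derivation. -/
noncomputable def drun {α τ : Type} (R : (List α × α) × List ℕ × τ → Prop)
    (L : List ((List α × α) × List ℕ × τ)) : List α × List ℕ :=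
  L.foldr (fun i s => dstep R i s) ([], [])

theorem primrec_drun {τ : Type} [Primcodable τ] {R : (List α × α) × List ℕ × τ → Prop}
    (hR : PrimrecPred R) : Primrec (drun R) := by
  classical
  have hmem : PrimrecRel (fun (p : α) (d : List α) => p ∈ d) := by
    have : PrimrecRel (fun (d : List α) (p : α) => ∃ a ∈ d, a = p) :=
      PrimrecRel.exists_mem_list Primrec.eq
    exact (this.comp Primrec.snd Primrec.fst).of_eq (by intro; simp)
  have hsub : PrimrecRel (fun (ps d : List α) => ∀ p ∈ ps, p ∈ d) :=
    PrimrecRel.forall_mem_list hmem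
  have hstep : Primrec₂ (dstep R) := by
    unfold dstep
    refine Primrec.ite ?_ ?_ Primrec.snd
    · exact (hR.comp Primrec.fst).and (hsub.comp
        (Primrec.fst.comp (Primrec.fst.comp Primrec.fst)) (Primrec.fst.comp Primrec.snd))
    · exact Primrec.pair (Primrec.list_cons.comp
        (Primrec.snd.comp (Primrec.fst.comp Primrec.fst)) (Primrec.fst.comp Primrec.snd))
        (Primrec.list_append.comp (Primrec.fst.comp (Primrec.snd.comp Primrec.fst))
          (Primrec.snd.comp Primrec.snd))
  unfold drun
  exact Primrec.list_foldr Primrec.id (Primrec.const _)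
    (h := fun _ w => dstep R w.1 w.2)
    (hstep.comp (Primrec.fst.comp Primrec.snd) (Primrec.snd.comp Primrec.snd))

theorem EP.clo {Rl : List α × α → Prop} (h : EP Y Rl) : EP Y (Clo Rl) := by
  classical
  obtain ⟨τ, i, R, hR, h⟩ := h
  refine ⟨List ((List α × α) × List ℕ × τ), inferInstance,
    fun z => (∃ b ∈ (drun R z.2.2).1, b = z.1) ∧ z.2.1 = (drun R z.2.2).2, ?_, fun a => ?_⟩
  · have hd : Primrec (fun z : α × List ℕ × List ((List α × α) × List ℕ × τ) => drun R z.2.2) :=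
      (primrec_drun hR).comp (Primrec.snd.comp Primrec.snd)
    have hm : PrimrecRel (fun (d : List α) (p : α) => ∃ a ∈ d, a = p) :=
      PrimrecRel.exists_mem_list Primrec.eq
    exact (hm.comp (Primrec.fst.comp hd) Primrec.fst).and
      (Primrec.eq.comp (Primrec.fst.comp Primrec.snd) (Primrec.snd.comp hd))
  · have rcons : ∀ x L, drun R (x :: L) = dstep R x (drun R L) := fun _ _ => rfl
    constructor
    · intro ha
      have main : ∀ a, Clo Rl a → ∀ L, (∀ k ∈ (drun R L).2, k ∈ Y) →
          ∃ L', (∀ k ∈ (drun R L').2, k ∈ Y) ∧ (∀ p ∈ (drun R L).1, p ∈ (drun R L').1) ∧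
            a ∈ (drun R L').1 := by
        intro a ha
        induction ha with
        | mk ps a hr hps ih =>
          intro L hL
          have aux : ∀ qs : List α, (∀ p ∈ qs, p ∈ ps) → ∃ L', (∀ k ∈ (drun R L').2, k ∈ Y) ∧
              (∀ p ∈ (drun R L).1, p ∈ (drun R L').1) ∧ ∀ p ∈ qs, p ∈ (drun R L').1 := by
            intro qs
            induction qs with
            | nil => intro _; exact ⟨L, hL, fun _ h => h, by simp⟩
            | cons q qs ihq =>
              intro hq
              obtain ⟨L1, h1, h2, h3⟩ := ihq (fun p hp => hq p (List.mem_cons_of_mem _ hp))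
              obtain ⟨L2, g1, g2, g3⟩ := ih q (hq q List.mem_cons_self) L1 h1
              refine ⟨L2, g1, fun p hp => g2 p (h2 p hp), ?_⟩
              intro p hp
              rcases List.mem_cons.1 hp with rfl | hp
              · exact g3
              · exact g2 p (h3 p hp)
          obtain ⟨L1, h1, h2, h3⟩ := aux ps (fun _ h => h)
          obtain ⟨l, t, hRt, hl⟩ := (h _).1 hr
          refine ⟨((ps, a), l, t) :: L1, ?_⟩
          rw [rcons]
          have : dstep R ((ps, a), l, t) (drun R L1) = (a :: (drun R L1).1, l ++ (drun R L1).2) := by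
            unfold dstep
            rw [if_pos ⟨hRt, h3⟩]
          rw [this]
          refine ⟨?_, ?_, ?_⟩
          · intro k hk
            rcases List.mem_append.1 hk with hk | hk
            · exact hl k hk
            · exact h1 k hk
          · intro p hp
            exact List.mem_cons_of_mem _ (h2 p hp)
          · exact List.mem_cons_self
      obtain ⟨L, h1, -, h3⟩ := main a ha [] (by simp [drun])
      exact ⟨_, L, ⟨⟨a, h3, rfl⟩, rfl⟩, h1⟩
    · rintro ⟨l, L, ⟨⟨b, hb, hba⟩, hl⟩, hY⟩
      simp only at hb hba hl
      subst hba hl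
      have main : ∀ L, (∀ k ∈ (drun R L).2, k ∈ Y) → ∀ p ∈ (drun R L).1, Clo Rl p := by
        intro L
        induction L with
        | nil => intro _ p hp; simp [drun] at hp
        | cons x L ih =>
          rw [rcons]
          unfold dstep
          split_ifs with hc
          · intro hk p hp
            have hL := ih (fun k hk' => hk k (List.mem_append_right _ hk'))
            rcases List.mem_cons.1 hp with rfl | hp
            · refine Clo.mk x.1.1 _ ((h _).2 ⟨x.2.1, x.2.2, hc.1, fun k hk' =>
                hk k (List.mem_append_left _ hk')⟩) (fun p hp => hL p (hc.2 p hp))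
            · exact hL p hp
          · exact ih
      exact main L hY _ hb

theorem EP.forall_mem {P : α → Prop} (h : EP Y P) : EP Y (fun l : List α => ∀ a ∈ l, P a) := by
  have h1 : EP Y (fun q : List (List α) × List α => (∃ z : Unit, True ∧ q.1 = [] ∧ q.2 = []) ∨
      ∃ z : α × List α, P z.1 ∧ q.1 = [z.2] ∧ q.2 = z.1 :: z.2) := by
    refine EP.or (EP.rule (EP.of_prim ?_) (Primrec.const _) (Primrec.const _))
      (EP.rule (h.comp Primrec.fst) ?_ ?_)
    · exact (Primrec.eq.comp (Primrec.const ()) (Primrec.const ())).of_eq (by simp)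
    · exact Primrec.list_cons.comp Primrec.snd (Primrec.const [])
    · exact Primrec.list_cons.comp Primrec.fst Primrec.snd
  refine h1.clo.of_iff fun l => ?_
  constructor
  · intro hl
    induction hl with
    | mk ps a hr _ ih =>
      rcases hr with ⟨_, -, h1, h2⟩ | ⟨⟨z1, z2⟩, hz, h1, h2⟩
      · simp only at h2
        simp [h2]
      · simp only at h1 h2
        subst h2
        intro b hb
        rcases List.mem_cons.1 hb with rfl | hb
        · exact hz
        · exact ih z2 (by simp [h1]) b hb
  · intro hl
    induction l with
    | nil => exact Clo.mk [] [] (Or.inl ⟨(), trivial, rfl, rfl⟩) (by simp)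
    | cons a l ih =>
      refine Clo.mk [l] _ (Or.inr ⟨(a, l), hl a List.mem_cons_self, rfl, rfl⟩) ?_
      intro p hp
      rw [List.mem_singleton] at hp
      subst hp
      exact ih (fun b hb => hl b (List.mem_cons_of_mem _ hb))

end

/-! ### Codes -/

theorem exists_ocode_of_partrec {f : ℕ →. ℕ} (hf : Nat.Partrec f) :
    ∃ c : OCode, ∀ O, evalo O c = f := by
  have : ∀ c : Nat.Partrec.Code, ∃ c' : OCode, ∀ O, evalo O c' = c.eval := by
    intro c
    induction c with
    | zero => exact ⟨.zero, fun O => rfl⟩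
    | succ => exact ⟨.succ, fun O => rfl⟩
    | left => exact ⟨.left, fun O => rfl⟩
    | right => exact ⟨.right, fun O => rfl⟩
    | pair a b iha ihb =>
      obtain ⟨a', ha⟩ := iha
      obtain ⟨b', hb⟩ := ihb
      exact ⟨.pair a' b', fun O => by simp only [evalo, ha, hb, Nat.Partrec.Code.eval]; rfl⟩
    | comp a b iha ihb =>
      obtain ⟨a', ha⟩ := iha
      obtain ⟨b', hb⟩ := ihb
      exact ⟨.comp a' b', fun O => by simp only [evalo, ha, hb, Nat.Partrec.Code.eval]; rfl⟩
    | prec a b iha ihb =>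
      obtain ⟨a', ha⟩ := iha
      obtain ⟨b', hb⟩ := ihb
      exact ⟨.prec a' b', fun O => by simp only [evalo, ha, hb, Nat.Partrec.Code.eval]; rfl⟩
    | rfind' a iha =>
      obtain ⟨a', ha⟩ := iha
      exact ⟨.rfind' a', fun O => by simp only [evalo, ha, Nat.Partrec.Code.eval]; rfl⟩
  obtain ⟨c, rfl⟩ := Nat.Partrec.Code.exists_code.1 hf
  exact this c

theorem chi_empty : chi ∅ = Part.some ∘ fun _ => 0 := by
  funext n; simp [chi]

theorem partrec_evalo_empty (c : OCode) : Nat.Partrec (evalo (chi ∅) c) := by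
  have : ∃ c' : Nat.Partrec.Code, c'.eval = evalo (chi ∅) c := by
    induction c with
    | zero => exact ⟨.zero, rfl⟩
    | succ => exact ⟨.succ, rfl⟩
    | left => exact ⟨.left, rfl⟩
    | right => exact ⟨.right, rfl⟩
    | oracle => exact ⟨.zero, by funext n; simp [evalo, chi, Nat.Partrec.Code.eval]; rfl⟩
    | pair a b iha ihb =>
      obtain ⟨a', ha⟩ := iha
      obtain ⟨b', hb⟩ := ihb
      exact ⟨.pair a' b', by simp only [evalo, ha, hb, Nat.Partrec.Code.eval]; rfl⟩
    | comp a b iha ihb =>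
      obtain ⟨a', ha⟩ := iha
      obtain ⟨b', hb⟩ := ihb
      exact ⟨.comp a' b', by simp only [evalo, ha, hb, Nat.Partrec.Code.eval]; rfl⟩
    | prec a b iha ihb =>
      obtain ⟨a', ha⟩ := iha
      obtain ⟨b', hb⟩ := ihb
      exact ⟨.prec a' b', by simp only [evalo, ha, hb, Nat.Partrec.Code.eval]; rfl⟩
    | rfind' a iha =>
      obtain ⟨a', ha⟩ := iha
      exact ⟨.rfind' a', by simp only [evalo, ha, Nat.Partrec.Code.eval]; rfl⟩
  exact Nat.Partrec.Code.exists_code.2 this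

theorem EP_of_EnumLE {Z Y : Set ℕ} (h : EnumLE Z Y) : EP Y (· ∈ Z) := by
  obtain ⟨W, ⟨c, hc⟩, hW⟩ := h
  obtain ⟨d, hd⟩ := Nat.Partrec.Code.exists_code.1 (partrec_evalo_empty c)
  refine ⟨ℕ × ℕ, inferInstance, fun z => z.2.1 = bits z.2.2.1 ∧
    (Nat.Partrec.Code.evaln z.2.2.2 d (Nat.pair z.1 z.2.2.1)).isSome = true, ?_, fun x => ?_⟩
  · refine PrimrecPred.and (Primrec.eq.comp (Primrec.fst.comp Primrec.snd)
      (primrec_bits.comp (Primrec.fst.comp (Primrec.snd.comp Primrec.snd))))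
      (Primrec.eq.comp (Primrec.option_isSome.comp (Nat.Partrec.Code.primrec_evaln.comp
        (Primrec.pair (Primrec.pair (Primrec.snd.comp (Primrec.snd.comp Primrec.snd))
          (Primrec.const d)) (Primrec₂.natPair.comp Primrec.fst
            (Primrec.fst.comp (Primrec.snd.comp Primrec.snd)))))) (Primrec.const true))
  · show x ∈ Z ↔ _
    rw [hW]
    have key : ∀ u, Nat.pair x u ∈ W ↔
        ∃ k, (Nat.Partrec.Code.evaln k d (Nat.pair x u)).isSome = true := by
      intro u
      rw [hc, ← hd, Part.dom_iff_mem]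
      simp only [Nat.Partrec.Code.evaln_complete, Option.isSome_iff_exists]
      exact exists_comm
    constructor
    · rintro ⟨u, h1, h2⟩
      obtain ⟨k, hk⟩ := (key u).1 h1
      exact ⟨bits u, (u, k), ⟨rfl, hk⟩, Du_subset_iff.1 h2⟩
    · rintro ⟨m, ⟨u, k⟩, ⟨hm, hk⟩, h2⟩
      simp only at hm hk
      subst hm
      exact ⟨u, (key u).2 ⟨k, hk⟩, Du_subset_iff.2 h2⟩

theorem EnumLE_of_EP {Z Y : Set ℕ} (h : EP Y (· ∈ Z)) : EnumLE Z Y := by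
  classical
  obtain ⟨τ, i, R, hR, h⟩ := h
  let Q : ℕ → ℕ → Bool := fun n m =>
    (Option.map (fun p : List ℕ × τ => decide (R (n.unpair.1, p) ∧
      ∀ k ∈ p.1, k ∈ bits n.unpair.2)) (Encodable.decode m)).getD false
  have hQ : Primrec₂ Q := by
    have hmem : PrimrecRel (fun (p : ℕ) (d : List ℕ) => p ∈ d) := by
      have : PrimrecRel (fun (d : List ℕ) (p : ℕ) => ∃ a ∈ d, a = p) :=
        PrimrecRel.exists_mem_list Primrec.eq
      exact (this.comp Primrec.snd Primrec.fst).of_eq (by intro; simp)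
    have hsub : PrimrecRel (fun (ps d : List ℕ) => ∀ p ∈ ps, p ∈ d) :=
      PrimrecRel.forall_mem_list hmem
    refine Primrec.option_getD.comp (Primrec.option_map (Primrec.decode.comp Primrec.snd) ?_)
      (Primrec.const false)
    refine PrimrecPred.decide (PrimrecPred.and (hR.comp ?_) (hsub.comp ?_ ?_))
    · exact Primrec.pair (Primrec.fst.comp (Primrec.unpair.comp (Primrec.fst.comp Primrec.fst)))
        Primrec.snd
    · exact Primrec.fst.comp Primrec.snd
    · exact primrec_bits.comp (Primrec.snd.comp (Primrec.unpair.comp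
        (Primrec.fst.comp Primrec.fst)))
  have hp : Nat.Partrec fun n => Nat.rfind (fun m => Part.some (Q n m)) :=
    Partrec.nat_iff.1 (Partrec.rfind (hQ.to_comp.partrec₂))
  obtain ⟨c, hc⟩ := exists_ocode_of_partrec hp
  refine ⟨{n | ∃ m, Q n m = true}, ⟨c, fun n => ?_⟩, fun x => ?_⟩
  · rw [hc, Part.dom_iff_mem]
    constructor
    · rintro ⟨m, hm⟩
      have : (Nat.rfind fun m => Part.some (Q n m)).Dom :=
        Nat.rfind_dom.2 ⟨m, by simpa using hm.symm, by intros; trivial⟩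
      exact Part.dom_iff_mem.1 this
    · rintro ⟨m, hm⟩
      have := Nat.rfind_spec hm
      exact ⟨m, by simpa using this⟩
  · have hQ' : ∀ u, (∃ m, Q (Nat.pair x u) m = true) ↔
        ∃ l t, R (x, l, t) ∧ ∀ k ∈ l, k ∈ bits u := by
      intro u
      constructor
      · rintro ⟨m, hm⟩
        simp only [Q, Nat.unpair_pair] at hm
        cases hd : (Encodable.decode m : Option (List ℕ × τ)) with
        | none => simp [hd] at hm
        | some p =>
          simp only [hd, Option.map_some, Option.getD_some, decide_eq_true_eq] at hm
          exact ⟨p.1, p.2, hm⟩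
      · rintro ⟨l, t, h1, h2⟩
        refine ⟨Encodable.encode (l, t), ?_⟩
        simp only [Q, Nat.unpair_pair, Encodable.encodek, Option.map_some, Option.getD_some,
          decide_eq_true_eq]
        exact ⟨h1, h2⟩
    refine (h x).trans ?_
    simp only [Set.mem_ofPred_eq, hQ', Du_subset_iff]
    constructor
    · rintro ⟨l, t, h1, h2⟩
      obtain ⟨u, hu⟩ := exists_bits l
      exact ⟨u, ⟨l, t, h1, fun k hk => (hu k).2 hk⟩, fun k hk => h2 k ((hu k).1 hk)⟩
    · rintro ⟨u, ⟨l, t, h1, h2⟩, h3⟩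
      exact ⟨l, t, h1, fun k hk => h3 k (h2 k hk)⟩

end P1s

section P2s
theorem ofNat_pair (a b : ℕ) : OCode.ofNat (4 * Nat.pair a b + 5) =
    .pair (OCode.ofNat a) (OCode.ofNat b) := by
  rw [OCode.ofNat]
  have h1 : (4 * Nat.pair a b) % 4 = 0 := by omega
  have h2 : (4 * Nat.pair a b) / 4 = Nat.pair a b := by omega
  simp only [h1, h2, Nat.unpair_pair]

theorem ofNat_comp (a b : ℕ) : OCode.ofNat (4 * Nat.pair a b + 1 + 5) =
    .comp (OCode.ofNat a) (OCode.ofNat b) := by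
  rw [OCode.ofNat]
  have h1 : (4 * Nat.pair a b + 1) % 4 = 1 := by omega
  have h2 : (4 * Nat.pair a b + 1) / 4 = Nat.pair a b := by omega
  simp only [h1, h2, Nat.unpair_pair]

theorem ofNat_prec (a b : ℕ) : OCode.ofNat (4 * Nat.pair a b + 2 + 5) =
    .prec (OCode.ofNat a) (OCode.ofNat b) := by
  rw [OCode.ofNat]
  have h1 : (4 * Nat.pair a b + 2) % 4 = 2 := by omega
  have h2 : (4 * Nat.pair a b + 2) / 4 = Nat.pair a b := by omega
  simp only [h1, h2, Nat.unpair_pair]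

theorem ofNat_rfind (a b : ℕ) : OCode.ofNat (4 * Nat.pair a b + 3 + 5) =
    .rfind' (OCode.ofNat a) := by
  rw [OCode.ofNat]
  have h1 : (4 * Nat.pair a b + 3) % 4 = 3 := by omega
  have h2 : (4 * Nat.pair a b + 3) / 4 = Nat.pair a b := by omega
  simp only [h1, h2, Nat.unpair_pair]

theorem ofNat_surj (c : OCode) : ∃ e, OCode.ofNat e = c := by
  induction c with
  | zero => exact ⟨0, by rw [OCode.ofNat]⟩
  | succ => exact ⟨1, by rw [OCode.ofNat]⟩
  | left => exact ⟨2, by rw [OCode.ofNat]⟩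
  | right => exact ⟨3, by rw [OCode.ofNat]⟩
  | oracle => exact ⟨4, by rw [OCode.ofNat]⟩
  | pair a b iha ihb =>
    obtain ⟨a', rfl⟩ := iha
    obtain ⟨b', rfl⟩ := ihb
    exact ⟨_, ofNat_pair a' b'⟩
  | comp a b iha ihb =>
    obtain ⟨a', rfl⟩ := iha
    obtain ⟨b', rfl⟩ := ihb
    exact ⟨_, ofNat_comp a' b'⟩
  | prec a b iha ihb =>
    obtain ⟨a', rfl⟩ := iha
    obtain ⟨b', rfl⟩ := ihb
    exact ⟨_, ofNat_prec a' b'⟩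
  | rfind' a iha =>
    obtain ⟨a', rfl⟩ := iha
    exact ⟨_, ofNat_rfind a' 0⟩

theorem exists_ocode_of_primrec {f : ℕ → ℕ} (hf : Primrec f) :
    ∃ c : OCode, ∀ O n, evalo O c n = Part.some (f n) := by
  obtain ⟨c, hc⟩ := exists_ocode_of_partrec (Nat.Partrec.of_primrec (Primrec.nat_iff.1 hf))
  exact ⟨c, fun O n => by rw [hc]; rfl⟩

theorem mem_subApp {α : Type*} {P : α → Prop} {app : α → α → Part α} {a b c : Subtype P} {r : α}
    (h : app a.1 b.1 = Part.some r) : c ∈ subApp app P a b ↔ c.1 = r := by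
  unfold subApp
  rw [h, Part.bind_some, Part.mem_assert_iff]
  constructor
  · rintro ⟨h1, h2⟩
    rw [Part.mem_some_iff.1 h2]
  · intro h1
    subst h1
    exact ⟨c.2, Part.mem_some_iff.2 rfl⟩

theorem mem_bXApp {X : Set ℕ} {a b c : Bel X} :
    c ∈ bXApp X a b ↔ c.1 = fun n => (a.1 0).bind fun e => phi (pjoin a.1 b.1) e n :=
  mem_subApp (app := bApp) rfl

theorem mem_gXApp {Y : Set ℕ} {a b c : Gel Y} :
    c ∈ gXApp Y a b ↔ c.1 = {n | ∃ u, Nat.pair n u ∈ a.1 ∧ Du u ⊆ b.1} :=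
  mem_subApp (app := gApp) rfl

theorem evalo_comp_some {O : ℕ →. ℕ} {f g : OCode} {x z : ℕ} (h : evalo O g x = Part.some z) :
    evalo O (.comp f g) x = evalo O f z := by
  show Part.bind (evalo O g x) (evalo O f) = _
  rw [h]
  exact Part.bind_some _ _

theorem evalo_pair_some {O : ℕ →. ℕ} {f g : OCode} {x y z : ℕ} (h : evalo O f x = Part.some y)
    (h2 : evalo O g x = Part.some z) :
    evalo O (.pair f g) x = Part.some (Nat.pair y z) := by
  show Nat.pair <$> evalo O f x <*> evalo O g x = _
  rw [h, h2]
  simp [Seq.seq]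

theorem evalo_prec_zero {O : ℕ →. ℕ} {f g : OCode} {p : ℕ} :
    evalo O (.prec f g) (Nat.pair p 0) = evalo O f p := by
  simp only [evalo, Nat.unpaired, Nat.unpair_pair]
  rfl

theorem evalo_prec_succ {O : ℕ →. ℕ} {f g : OCode} {p n : ℕ} :
    evalo O (.prec f g) (Nat.pair p (n + 1)) =
      (evalo O (.prec f g) (Nat.pair p n)).bind fun i =>
        evalo O g (Nat.pair p (Nat.pair n i)) := by
  simp only [evalo, Nat.unpaired, Nat.unpair_pair]
  rfl

theorem evalo_left {O : ℕ →. ℕ} {x : ℕ} : evalo O .left x = Part.some x.unpair.1 := rfl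

theorem evalo_right {O : ℕ →. ℕ} {x : ℕ} : evalo O .right x = Part.some x.unpair.2 := rfl

theorem evalo_zero {O : ℕ →. ℕ} {x : ℕ} : evalo O .zero x = Part.some 0 := rfl

theorem evalo_succ {O : ℕ →. ℕ} {x : ℕ} : evalo O .succ x = Part.some (x + 1) := rfl

theorem evalo_oracle {O : ℕ →. ℕ} {x : ℕ} : evalo O .oracle x = O x := rfl

/-- Constant functions as elements of `B^X`. -/
def cst (X : Set ℕ) (n : ℕ) : Bel X :=
  ⟨fun _ => Part.some n, by
    obtain ⟨c, hc⟩ := exists_ocode_of_primrec (Primrec.const n : Primrec fun _ : ℕ => n)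
    exact ⟨c, funext fun m => hc _ m⟩⟩

theorem exists_succ (X : Set ℕ) : ∃ S : Bel X, ∀ n, cst X (n + 1) ∈ bXApp X S (cst X n) := by
  obtain ⟨one, h1⟩ := exists_ocode_of_primrec (Primrec.const 1 : Primrec fun _ : ℕ => 1)
  obtain ⟨e, he⟩ := ofNat_surj (.comp .succ (.comp .oracle one))
  refine ⟨cst X e, fun n => ?_⟩
  refine mem_bXApp.2 ?_
  funext m
  refine Eq.symm ((Part.bind_some _ _).trans ?_)
  show evalo _ (OCode.ofNat e) m = _
  rw [he]
  have : evalo (pjoin (cst X e).1 (cst X n).1) (.comp .oracle one) m = Part.some n :=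
    (evalo_comp_some (h1 _ m)).trans rfl
  exact (evalo_comp_some this).trans rfl

theorem exists_dec (X : Set ℕ) (a b : ℕ) : ∃ D : Bel X, ∀ n,
    (n ∈ X → cst X a ∈ bXApp X D (cst X n)) ∧ (n ∉ X → cst X b ∈ bXApp X D (cst X n)) := by
  classical
  obtain ⟨one, h1⟩ := exists_ocode_of_primrec (Primrec.const 1 : Primrec fun _ : ℕ => 1)
  obtain ⟨dbl, h2⟩ := exists_ocode_of_primrec
    (Primrec.nat_double.comp Primrec.succ : Primrec fun n : ℕ => 2 * (n + 1))
  obtain ⟨sel, h3⟩ := exists_ocode_of_primrec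
    (Primrec.ite (Primrec.eq.comp Primrec.id (Primrec.const 1)) (Primrec.const a)
      (Primrec.const b) : Primrec fun n : ℕ => if n = 1 then a else b)
  obtain ⟨e, he⟩ := ofNat_surj (.comp .oracle (.comp dbl (.comp .oracle one)))
  obtain ⟨ce, hce⟩ := exists_ocode_of_primrec (Primrec.const e : Primrec fun _ : ℕ => e)
  let th : ℕ → ℕ := fun n => n.casesOn e (fun x => if x ∈ X then a else b)
  have hr : RecursiveIn (chi X) (fun n => Part.some (th n)) := by
    refine ⟨.comp (.prec ce (.comp sel (.comp .oracle (.comp .left .right))))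
      (.pair .zero (.pair .left .right)), ?_⟩
    funext n
    have hp : evalo (chi X) (.pair .zero (.pair .left .right)) n = Part.some (Nat.pair 0 n) := by
      have := evalo_pair_some (O := chi X) (x := n) evalo_zero
        (evalo_pair_some evalo_left evalo_right)
      simpa using this
    have hq : ∀ m, evalo (chi X) (.prec ce (.comp sel (.comp .oracle (.comp .left .right))))
        (Nat.pair 0 m) = Part.some (th m) := by
      intro m
      induction m with
      | zero => exact evalo_prec_zero.trans (hce _ _)
      | succ k ih =>
        rw [evalo_prec_succ, ih, Part.bind_some]
        have e1 : evalo (chi X) (.comp .left .right) (Nat.pair 0 (Nat.pair k (th k))) =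
            Part.some k := by
          rw [evalo_comp_some evalo_right, evalo_left]
          simp
        have e2 : evalo (chi X) (.comp .oracle (.comp .left .right))
            (Nat.pair 0 (Nat.pair k (th k))) = Part.some (X.indicator (fun _ => 1) k) :=
          evalo_comp_some e1
        rw [evalo_comp_some e2, h3]
        by_cases hk : k ∈ X <;> simp [th, hk]
    rw [evalo_comp_some hp]
    exact hq n
  refine ⟨⟨_, hr⟩, fun n => ?_⟩
  have key : ∀ m, phi (pjoin (fun n => Part.some (th n)) (cst X n).1) e m =
      Part.some (if n ∈ X then a else b) := by
    intro m
    show evalo _ (OCode.ofNat e) m = _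
    rw [he]
    have e1 : evalo (pjoin (fun n => Part.some (th n)) (cst X n).1) (.comp .oracle one) m =
        Part.some n := (evalo_comp_some (h1 _ m)).trans rfl
    have e2 : evalo (pjoin (fun n => Part.some (th n)) (cst X n).1)
        (.comp dbl (.comp .oracle one)) m = Part.some (2 * (n + 1)) :=
      (evalo_comp_some e1).trans (h2 _ _)
    rw [evalo_comp_some e2, evalo_oracle]
    have m1 : 2 * (n + 1) % 2 = 0 := by omega
    have m2 : 2 * (n + 1) / 2 = n + 1 := by omega
    unfold pjoin
    rw [if_pos m1, m2]
  constructor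
  · intro hn
    refine mem_bXApp.2 ?_
    funext m
    refine Eq.symm ((Part.bind_some _ _).trans ((key m).trans ?_))
    rw [if_pos hn]
    rfl
  · intro hn
    refine mem_bXApp.2 ?_
    funext m
    refine Eq.symm ((Part.bind_some _ _).trans ((key m).trans ?_))
    rw [if_neg hn]
    rfl

theorem forward (X Y : Set ℕ) (f : Bel X → Gel Y)
    (hf : IsPCAEmbedding (bXApp X) (gXApp Y) f) : EnumLE (joinCompl X) Y := by
  obtain ⟨hinj, happ⟩ := hf
  have happ' : ∀ a b c, c ∈ bXApp X a b → ∀ k, k ∈ (f c).1 ↔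
      ∃ u, Nat.pair k u ∈ (f a).1 ∧ ∀ j ∈ bits u, j ∈ (f b).1 := by
    intro a b c h k
    rw [mem_gXApp.1 (happ a b c h)]
    simp only [Du_subset_iff]
    rfl
  have hEP : ∀ a, EP Y (· ∈ (f a).1) := fun a => EP_of_EnumLE (f a).2
  have hsep : ∃ a b p, p ∈ (f (cst X a)).1 ∧ p ∉ (f (cst X b)).1 := by
    by_contra hcon
    push Not at hcon
    have h01 : cst X 0 = cst X 1 :=
      hinj (Subtype.ext (Set.Subset.antisymm (fun p => hcon 0 1 p) (fun p => hcon 1 0 p)))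
    have := congrFun (congrArg Subtype.val h01) 0
    simp [cst] at this
  obtain ⟨a, b, p, hpa, hpb⟩ := hsep
  obtain ⟨S, hS⟩ := exists_succ X
  obtain ⟨D, hD⟩ := exists_dec X a b
  obtain ⟨D', hD'⟩ := exists_dec X b a
  -- the numerals are uniformly enumerable
  have hN : EP Y (fun z : ℕ × ℕ => z.2 ∈ (f (cst X z.1)).1) := by
    have h1 : EP Y (fun q : List (ℕ × ℕ) × (ℕ × ℕ) =>
        (∃ z : ℕ, z ∈ (f (cst X 0)).1 ∧ q.1 = [] ∧ q.2 = (0, z)) ∨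
        ∃ z : ℕ × ℕ × ℕ, Nat.pair z.2.1 z.2.2 ∈ (f S).1 ∧
          q.1 = (bits z.2.2).map (fun j => (z.1, j)) ∧ q.2 = (z.1 + 1, z.2.1)) := by
      refine EP.or (EP.rule (hEP _) (Primrec.const _) (Primrec.pair (Primrec.const 0) Primrec.id))
        (EP.rule (EP.comp (hEP S) (Primrec₂.natPair.comp (Primrec.fst.comp Primrec.snd)
          (Primrec.snd.comp Primrec.snd))) ?_ ?_)
      · exact Primrec.list_map (primrec_bits.comp (Primrec.snd.comp Primrec.snd))
          (Primrec.pair (Primrec.fst.comp Primrec.fst) Primrec.snd)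
      · exact Primrec.pair (Primrec.succ.comp Primrec.fst) (Primrec.fst.comp Primrec.snd)
    refine h1.clo.of_iff fun z => ?_
    constructor
    · intro hz
      induction hz with
      | mk ps c hr _ ih =>
        rcases hr with ⟨z, hz, h1, h2⟩ | ⟨⟨n, k, u⟩, hz, h1, h2⟩
        · simp only at h2
          subst h2
          exact hz
        · simp only at h1 h2 hz
          subst h2 h1
          refine (happ' _ _ _ (hS n) k).2 ⟨u, hz, fun j hj => ?_⟩
          exact ih (n, j) (List.mem_map.2 ⟨j, hj, rfl⟩)
    · obtain ⟨n, k⟩ := z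
      simp only
      induction n generalizing k with
      | zero => intro hk; exact Clo.mk [] _ (Or.inl ⟨k, hk, rfl, rfl⟩) (by simp)
      | succ n ih =>
        intro hk
        obtain ⟨u, hu, hj⟩ := (happ' _ _ _ (hS n) k).1 hk
        refine Clo.mk _ _ (Or.inr ⟨(n, k, u), hu, rfl, rfl⟩) ?_
        intro q hq
        obtain ⟨j, hj', rfl⟩ := List.mem_map.1 hq
        exact ih j (hj j hj')
  have hA : ∀ D : Bel X, EP Y (fun n : ℕ => ∃ u, Nat.pair p u ∈ (f D).1 ∧
      ∀ j ∈ bits u, j ∈ (f (cst X n)).1) := by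
    intro D
    refine EP.exists (P := fun z : ℕ × ℕ => Nat.pair p z.2 ∈ (f D).1 ∧
      ∀ j ∈ bits z.2, j ∈ (f (cst X z.1)).1) (EP.and
        (EP.comp (hEP D) (Primrec₂.natPair.comp (Primrec.const p) Primrec.snd)) ?_)
    have := EP.comp hN.forall_mem (f := fun z : ℕ × ℕ => (bits z.2).map fun j => (z.1, j))
      (Primrec.list_map (primrec_bits.comp Primrec.snd)
        (Primrec.pair (Primrec.fst.comp Primrec.fst) Primrec.snd))
    exact this.of_iff fun z => by simp
  have hX : ∀ n, (∃ u, Nat.pair p u ∈ (f D).1 ∧ ∀ j ∈ bits u, j ∈ (f (cst X n)).1) ↔ n ∈ X := by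
    intro n
    by_cases hn : n ∈ X
    · simp only [hn, iff_true]
      exact (happ' _ _ _ ((hD n).1 hn) p).1 hpa
    · simp only [hn, iff_false]
      exact fun h => hpb ((happ' _ _ _ ((hD n).2 hn) p).2 h)
  have hX' : ∀ n, (∃ u, Nat.pair p u ∈ (f D').1 ∧ ∀ j ∈ bits u, j ∈ (f (cst X n)).1) ↔
      n ∉ X := by
    intro n
    by_cases hn : n ∈ X
    · simp only [hn, not_true_eq_false, iff_false]
      exact fun h => hpb ((happ' _ _ _ ((hD' n).1 hn) p).2 h)
    · simp only [hn, not_false_eq_true, iff_true]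
      exact (happ' _ _ _ ((hD' n).2 hn) p).1 hpa
  have e1 := (hA D).of_iff hX
  have e2 := (hA D').of_iff hX'
  apply EnumLE_of_EP
  refine EP.exists (P := fun z : ℕ × ℕ => (z.1 = 2 * z.2 ∧ z.2 ∈ X) ∨
    (z.1 = 2 * z.2 + 1 ∧ z.2 ∉ X)) (EP.or ?_ ?_)
  · exact EP.and (EP.of_prim (Primrec.eq.comp Primrec.fst
      (Primrec.nat_double.comp Primrec.snd))) (EP.comp e1 Primrec.snd)
  · exact EP.and (EP.of_prim (Primrec.eq.comp Primrec.fst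
      (Primrec.nat_double_succ.comp Primrec.snd))) (EP.comp e2 Primrec.snd)

end P2s

section P3s
/-! ### Relational evaluation -/

/-- Evaluation of oracle programs relative to a relation. -/
inductive Ev (R : ℕ → ℕ → Prop) : ℕ → ℕ → ℕ → Prop
  | zero (x : ℕ) : Ev R 0 x 0
  | succ (x : ℕ) : Ev R 1 x (x + 1)
  | left (x : ℕ) : Ev R 2 x x.unpair.1
  | right (x : ℕ) : Ev R 3 x x.unpair.2
  | oracle (x y : ℕ) : R x y → Ev R 4 x y
  | pair (a b x y z : ℕ) : Ev R a x y → Ev R b x z →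
      Ev R (4 * Nat.pair a b + 5) x (Nat.pair y z)
  | comp (a b x y z : ℕ) : Ev R b x z → Ev R a z y → Ev R (4 * Nat.pair a b + 1 + 5) x y
  | prec0 (a b p y : ℕ) : Ev R a p y → Ev R (4 * Nat.pair a b + 2 + 5) (Nat.pair p 0) y
  | precS (a b p n i y : ℕ) : Ev R (4 * Nat.pair a b + 2 + 5) (Nat.pair p n) i →
      Ev R b (Nat.pair p (Nat.pair n i)) y →
      Ev R (4 * Nat.pair a b + 2 + 5) (Nat.pair p (n + 1)) y
  | rfind0 (a b p m : ℕ) : Ev R a (Nat.pair p m) 0 →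
      Ev R (4 * Nat.pair a b + 3 + 5) (Nat.pair p m) m
  | rfindS (a b p m z r : ℕ) : Ev R a (Nat.pair p m) (z + 1) →
      Ev R (4 * Nat.pair a b + 3 + 5) (Nat.pair p (m + 1)) r →
      Ev R (4 * Nat.pair a b + 3 + 5) (Nat.pair p m) r

theorem mem_evalo_comp {O : ℕ →. ℕ} {f g : OCode} {x y : ℕ} :
    y ∈ evalo O (.comp f g) x ↔ ∃ z ∈ evalo O g x, y ∈ evalo O f z :=
  Part.mem_bind_iff

theorem mem_evalo_pair {O : ℕ →. ℕ} {f g : OCode} {x y : ℕ} :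
    y ∈ evalo O (.pair f g) x ↔
      ∃ z ∈ evalo O f x, ∃ w ∈ evalo O g x, y = Nat.pair z w := by
  show y ∈ Nat.pair <$> evalo O f x <*> evalo O g x ↔ _
  simp [Seq.seq, eq_comm]

theorem mem_evalo_rfind {O : ℕ →. ℕ} {f : OCode} {p m y : ℕ} :
    y ∈ evalo O (.rfind' f) (Nat.pair p m) ↔ m ≤ y ∧ 0 ∈ evalo O f (Nat.pair p y) ∧
      ∀ k, m ≤ k → k < y → ∃ z, z + 1 ∈ evalo O f (Nat.pair p k) := by
  simp only [evalo, Nat.unpaired, Nat.unpair_pair]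
  rw [Part.mem_map_iff]
  constructor
  · rintro ⟨n, hn, rfl⟩
    obtain ⟨h1, h2⟩ := Nat.mem_rfind.1 hn
    refine ⟨by omega, ?_, ?_⟩
    · obtain ⟨z, hz, h⟩ := (Part.mem_map_iff _).1 h1
      have : z = 0 := by simpa using h
      exact this ▸ hz
    · intro k hk hk2
      obtain ⟨z, hz, h⟩ := (Part.mem_map_iff _).1 (h2 (m := k - m) (by omega))
      have h0 : z ≠ 0 := by simpa using h
      refine ⟨z - 1, ?_⟩
      rwa [show z - 1 + 1 = z by omega, show k = k - m + m by omega]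
  · rintro ⟨h1, h2, h3⟩
    refine ⟨y - m, Nat.mem_rfind.2 ⟨?_, ?_⟩, by omega⟩
    · refine (Part.mem_map_iff _).2 ⟨0, ?_, by simp⟩
      rwa [show y - m + m = y by omega]
    · intro k hk
      obtain ⟨z, hz⟩ := h3 (k + m) (by omega) (by omega)
      exact (Part.mem_map_iff _).2 ⟨z + 1, hz, by simp⟩

/-- The graph of a partial function. -/
def gr (θ : ℕ →. ℕ) (x y : ℕ) : Prop := y ∈ θ x

theorem evalo_of_Ev {O : ℕ →. ℕ} {e x y : ℕ} (h : Ev (gr O) e x y) :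
    y ∈ evalo O (OCode.ofNat e) x := by
  induction h with
  | zero x => rw [OCode.ofNat]; exact Part.mem_some _
  | succ x => rw [OCode.ofNat]; exact Part.mem_some _
  | left x => rw [OCode.ofNat]; exact Part.mem_some _
  | right x => rw [OCode.ofNat]; exact Part.mem_some _
  | oracle x y h => rw [OCode.ofNat]; exact h
  | pair a b x y z _ _ h1 h2 => rw [ofNat_pair]; exact mem_evalo_pair.2 ⟨_, h1, _, h2, rfl⟩
  | comp a b x y z _ _ h1 h2 => rw [ofNat_comp]; exact mem_evalo_comp.2 ⟨_, h1, h2⟩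
  | prec0 a b p y _ h => rw [ofNat_prec, evalo_prec_zero]; exact h
  | precS a b p n i y _ _ h1 h2 =>
    rw [ofNat_prec] at h1
    rw [ofNat_prec, evalo_prec_succ]
    exact Part.mem_bind_iff.2 ⟨i, h1, h2⟩
  | rfind0 a b p m _ h =>
    rw [ofNat_rfind]
    exact mem_evalo_rfind.2 ⟨le_rfl, h, fun k h1 h2 => by omega⟩
  | rfindS a b p m z r _ _ h1 h2 =>
    rw [ofNat_rfind] at h2 ⊢
    obtain ⟨g1, g2, g3⟩ := mem_evalo_rfind.1 h2
    refine mem_evalo_rfind.2 ⟨by omega, g2, fun k hk1 hk2 => ?_⟩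
    rcases eq_or_lt_of_le hk1 with rfl | hk
    · exact ⟨z, h1⟩
    · exact g3 k hk hk2

theorem code_cases (e : ℕ) : e < 5 ∨ ∃ a b, a < e ∧ b < e ∧ (e = 4 * Nat.pair a b + 5 ∨
    e = 4 * Nat.pair a b + 1 + 5 ∨ e = 4 * Nat.pair a b + 2 + 5 ∨
    e = 4 * Nat.pair a b + 3 + 5) := by
  rcases lt_or_ge e 5 with h | h
  · exact Or.inl h
  · refine Or.inr ⟨((e - 5) / 4).unpair.1, ((e - 5) / 4).unpair.2, ?_, ?_, ?_⟩
    · have := Nat.unpair_left_le ((e - 5) / 4)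
      omega
    · have := Nat.unpair_right_le ((e - 5) / 4)
      omega
    · rw [Nat.pair_unpair]
      omega

theorem Ev_of_evalo {O : ℕ →. ℕ} (e : ℕ) : ∀ {x y : ℕ}, y ∈ evalo O (OCode.ofNat e) x →
    Ev (gr O) e x y := by
  induction e using Nat.strong_induction_on with
  | _ e ih =>
  intro x y h
  rcases code_cases e with he | ⟨a, b, ha, hb, rfl | rfl | rfl | rfl⟩
  · have h5 : e = 0 ∨ e = 1 ∨ e = 2 ∨ e = 3 ∨ e = 4 := by omega
    rcases h5 with rfl | rfl | rfl | rfl | rfl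
    · rw [OCode.ofNat] at h
      obtain rfl := Part.mem_some_iff.1 h
      exact Ev.zero x
    · rw [OCode.ofNat] at h
      obtain rfl := Part.mem_some_iff.1 h
      exact Ev.succ x
    · rw [OCode.ofNat] at h
      obtain rfl := Part.mem_some_iff.1 h
      exact Ev.left x
    · rw [OCode.ofNat] at h
      obtain rfl := Part.mem_some_iff.1 h
      exact Ev.right x
    · rw [OCode.ofNat] at h
      exact Ev.oracle x y h
  · rw [ofNat_pair] at h
    obtain ⟨z, hz, w, hw, rfl⟩ := mem_evalo_pair.1 h
    exact Ev.pair _ _ _ _ _ (ih a ha hz) (ih b hb hw)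
  · rw [ofNat_comp] at h
    obtain ⟨z, hz, hw⟩ := mem_evalo_comp.1 h
    exact Ev.comp _ _ _ _ _ (ih b hb hz) (ih a ha hw)
  · rw [ofNat_prec] at h
    obtain ⟨p, n, rfl⟩ : ∃ p n, x = Nat.pair p n := ⟨_, _, (Nat.pair_unpair x).symm⟩
    induction n generalizing y with
    | zero =>
      rw [evalo_prec_zero] at h
      exact Ev.prec0 _ _ _ _ (ih a ha h)
    | succ n ihn =>
      rw [evalo_prec_succ] at h
      obtain ⟨i, h1, h2⟩ := Part.mem_bind_iff.1 h
      exact Ev.precS _ _ _ _ _ _ (ihn h1) (ih b hb h2)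
  · rw [ofNat_rfind] at h
    obtain ⟨p, m, rfl⟩ : ∃ p n, x = Nat.pair p n := ⟨_, _, (Nat.pair_unpair x).symm⟩
    obtain ⟨h1, h2, h3⟩ := mem_evalo_rfind.1 h
    clear h
    obtain ⟨d, rfl⟩ := Nat.exists_eq_add_of_le h1
    clear h1
    induction d generalizing m with
    | zero => exact Ev.rfind0 _ _ _ _ (ih a ha h2)
    | succ d ihd =>
      obtain ⟨z, hz⟩ := h3 m le_rfl (by omega)
      refine Ev.rfindS _ _ _ _ z _ (ih a ha hz) ?_
      have := ihd (m + 1) (by rwa [show m + 1 + d = m + (d + 1) by omega])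
        (fun k hk1 hk2 => h3 k (by omega) (by omega))
      rwa [show m + 1 + d = m + (d + 1) by omega] at this

theorem Ev_iff {O : ℕ →. ℕ} {e x y : ℕ} : y ∈ evalo O (OCode.ofNat e) x ↔ Ev (gr O) e x y :=
  ⟨Ev_of_evalo e, evalo_of_Ev⟩

/-- Relational join. -/
def rjoin (A B : ℕ → ℕ → Prop) (n y : ℕ) : Prop :=
  if n % 2 = 0 then A (n / 2) y else B (n / 2) y

/-- Relational application. -/
def rapp (A B : ℕ → ℕ → Prop) (x y : ℕ) : Prop := ∃ e, A 0 e ∧ Ev (rjoin A B) e x y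

theorem gr_pjoin (θ ρ : ℕ →. ℕ) : gr (pjoin θ ρ) = rjoin (gr θ) (gr ρ) := by
  funext x y
  unfold gr pjoin rjoin
  split <;> rfl

theorem gr_app (θ ρ : ℕ →. ℕ) :
    gr (fun n => (θ 0).bind fun e => phi (pjoin θ ρ) e n) = rapp (gr θ) (gr ρ) := by
  funext x y
  apply propext
  refine Part.mem_bind_iff.trans ?_
  unfold rapp
  rw [← gr_pjoin]
  exact exists_congr fun e => and_congr Iff.rfl Ev_iff

/-! ### Continuity -/

/-- `ρ` contains all the pairs in `l`. -/
def Has (ρ : ℕ → ℕ → Prop) (l : List (ℕ × ℕ)) : Prop := ∀ p ∈ l, ρ p.1 p.2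

theorem Has_append {ρ : ℕ → ℕ → Prop} {l l' : List (ℕ × ℕ)} :
    Has ρ (l ++ l') ↔ Has ρ l ∧ Has ρ l' := by
  unfold Has
  simp only [List.mem_append]
  exact ⟨fun h => ⟨fun p hp => h p (Or.inl hp), fun p hp => h p (Or.inr hp)⟩,
    fun h p hp => hp.elim (h.1 p) (h.2 p)⟩

/-- Continuity of a predicate transformer. -/
def CP (P : (ℕ → ℕ → Prop) → Prop) : Prop :=
  ∀ ρ, P ρ → ∃ l, Has ρ l ∧ ∀ ρ', Has ρ' l → P ρ'

def Cont (H : (ℕ → ℕ → Prop) → ℕ → ℕ → Prop) : Prop := ∀ x y, CP (fun ρ => H ρ x y)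

theorem Cont_const (A : ℕ → ℕ → Prop) : Cont (fun _ => A) :=
  fun _ _ _ h => ⟨[], fun _ hp => by simp at hp, fun _ _ => h⟩

theorem Cont_id : Cont (fun ρ => ρ) :=
  fun x y _ h => ⟨[(x, y)], by simpa [Has] using h, fun _ h' => by simpa [Has] using h'⟩

theorem Cont_rjoin {H K : (ℕ → ℕ → Prop) → ℕ → ℕ → Prop} (hH : Cont H) (hK : Cont K) :
    Cont (fun ρ => rjoin (H ρ) (K ρ)) := by
  intro x y
  by_cases h : x % 2 = 0
  · simp only [rjoin, if_pos h]
    exact hH _ _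
  · simp only [rjoin, if_neg h]
    exact hK _ _

/-- Local form of continuity at a point. -/
def Loc (ρ : ℕ → ℕ → Prop) (P : (ℕ → ℕ → Prop) → Prop) : Prop :=
  ∃ l, Has ρ l ∧ ∀ ρ', Has ρ' l → P ρ'

theorem Loc.triv {ρ : ℕ → ℕ → Prop} {P : (ℕ → ℕ → Prop) → Prop} (h : ∀ ρ', P ρ') : Loc ρ P :=
  ⟨[], fun _ hp => by simp at hp, fun ρ' _ => h ρ'⟩

theorem Loc.imp {ρ : ℕ → ℕ → Prop} {P Q : (ℕ → ℕ → Prop) → Prop} (h1 : Loc ρ P)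
    (h : ∀ ρ', P ρ' → Q ρ') : Loc ρ Q := by
  obtain ⟨l, g1, g2⟩ := h1
  exact ⟨l, g1, fun ρ' h' => h ρ' (g2 ρ' h')⟩

theorem Loc.imp₂ {ρ : ℕ → ℕ → Prop} {P P' Q : (ℕ → ℕ → Prop) → Prop} (h1 : Loc ρ P)
    (h2 : Loc ρ P') (h : ∀ ρ', P ρ' → P' ρ' → Q ρ') : Loc ρ Q := by
  obtain ⟨l, g1, g2⟩ := h1
  obtain ⟨l', g1', g2'⟩ := h2
  exact ⟨l ++ l', Has_append.2 ⟨g1, g1'⟩, fun ρ' h' =>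
    h ρ' (g2 ρ' (Has_append.1 h').1) (g2' ρ' (Has_append.1 h').2)⟩

theorem Cont_Ev {H : (ℕ → ℕ → Prop) → ℕ → ℕ → Prop} (hH : Cont H) {ρ : ℕ → ℕ → Prop}
    {e x y : ℕ} (h : Ev (H ρ) e x y) : Loc ρ (fun ρ => Ev (H ρ) e x y) := by
  induction h with
  | zero x => exact Loc.triv fun _ => Ev.zero x
  | succ x => exact Loc.triv fun _ => Ev.succ x
  | left x => exact Loc.triv fun _ => Ev.left x
  | right x => exact Loc.triv fun _ => Ev.right x
  | oracle x y h => exact Loc.imp (hH x y ρ h) fun ρ' h' => Ev.oracle x y h'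
  | pair a b x y z _ _ h1 h2 => exact h1.imp₂ h2 fun ρ' => Ev.pair a b x y z
  | comp a b x y z _ _ h1 h2 => exact h1.imp₂ h2 fun ρ' => Ev.comp a b x y z
  | prec0 a b p y _ h => exact h.imp fun ρ' => Ev.prec0 a b p y
  | precS a b p n i y _ _ h1 h2 => exact h1.imp₂ h2 fun ρ' => Ev.precS a b p n i y
  | rfind0 a b p m _ h => exact h.imp fun ρ' => Ev.rfind0 a b p m
  | rfindS a b p m z r _ _ h1 h2 => exact h1.imp₂ h2 fun ρ' => Ev.rfindS a b p m z r

theorem Cont_rapp {H K : (ℕ → ℕ → Prop) → ℕ → ℕ → Prop} (hH : Cont H) (hK : Cont K) :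
    Cont (fun ρ => rapp (H ρ) (K ρ)) := by
  rintro x y ρ ⟨e, h1, h2⟩
  exact Loc.imp₂ (hH 0 e ρ h1) (Cont_Ev (Cont_rjoin hH hK) h2) fun ρ' g1 g2 => ⟨e, g1, g2⟩

/-! ### The embedding -/

/-- The finite relation coded by `u`. -/
def sg (u x y : ℕ) : Prop := u.testBit (Nat.pair (Nat.pair x y) 1) = true

/-- The set assigned to a relation. -/
inductive F : (ℕ → ℕ → Prop) → ℕ → Prop
  | graph (A : ℕ → ℕ → Prop) (x y : ℕ) : A x y → F A (Nat.pair (Nat.pair x y) 1)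
  | app (A : ℕ → ℕ → Prop) (n u : ℕ) : u ≠ 1 → F (rapp A (sg u)) n → F A (Nat.pair n u)

theorem pair_one_ne (n : ℕ) : Nat.pair n 1 ≠ 0 := by
  intro h
  have := congrArg (fun m => m.unpair.2) h
  simp at this

theorem F_ne_zero {A : ℕ → ℕ → Prop} {n : ℕ} (h : F A n) : n ≠ 0 := by
  induction h with
  | graph A x y _ => exact pair_one_ne _
  | app A n u _ _ ih =>
    intro h
    apply ih
    have := congrArg (fun m => m.unpair.1) h
    simpa using this

theorem F_graph {A : ℕ → ℕ → Prop} {x y : ℕ} :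
    F A (Nat.pair (Nat.pair x y) 1) ↔ A x y := by
  refine ⟨fun h => ?_, F.graph A x y⟩
  generalize hn : Nat.pair (Nat.pair x y) 1 = n at h
  cases h with
  | graph A x' y' h =>
    simp only [Nat.pair_eq_pair] at hn
    obtain ⟨⟨rfl, rfl⟩, _⟩ := hn
    exact h
  | app A n u hu h =>
    exact absurd (Nat.pair_eq_pair.1 hn).2.symm hu

theorem F_app {A : ℕ → ℕ → Prop} {n u : ℕ} (hu : u ≠ 1) :
    F A (Nat.pair n u) ↔ F (rapp A (sg u)) n := by
  refine ⟨fun h => ?_, F.app A n u hu⟩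
  generalize hn : Nat.pair n u = m at h
  cases h with
  | graph A x' y' h =>
    exact absurd (Nat.pair_eq_pair.1 hn).2 hu
  | app A n' u' hu' h =>
    obtain ⟨rfl, rfl⟩ := Nat.pair_eq_pair.1 hn
    exact h

theorem Cont_F {A : ℕ → ℕ → Prop} {n : ℕ} (h : F A n) :
    ∀ (H : (ℕ → ℕ → Prop) → ℕ → ℕ → Prop) (_ : Cont H) (ρ : ℕ → ℕ → Prop), A = H ρ →
      Loc ρ (fun ρ => F (H ρ) n) := by
  induction h with
  | graph A x y h =>
    rintro H hH ρ rfl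
    exact Loc.imp (hH x y ρ h) fun ρ' => F.graph _ x y
  | app A n u hu _ ih =>
    rintro H hH ρ rfl
    exact (ih (fun ρ => rapp (H ρ) (sg u)) (Cont_rapp hH (Cont_const _)) ρ rfl).imp
      fun ρ' => F.app _ n u hu

theorem F_rapp (A B : ℕ → ℕ → Prop) (n : ℕ) :
    F (rapp A B) n ↔ ∃ u, F A (Nat.pair n u) ∧ Du u ⊆ {n | F B n} := by
  constructor
  · intro h
    obtain ⟨l, h1, h2⟩ := Cont_F h (fun ρ => rapp A ρ) (Cont_rapp (Cont_const A) Cont_id) B rfl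
    obtain ⟨u, hu⟩ := exists_bits (l.map fun p => Nat.pair (Nat.pair p.1 p.2) 1)
    have hu1 : u ≠ 1 := by
      rintro rfl
      have : (0 : ℕ) ∈ bits 1 := mem_bits.2 (by decide)
      obtain ⟨p, _, hp⟩ := List.mem_map.1 ((hu 0).1 this)
      exact pair_one_ne _ hp
    refine ⟨u, (F_app hu1).2 (h2 _ fun p hp => ?_), ?_⟩
    · exact mem_bits.1 ((hu _).2 (List.mem_map.2 ⟨p, hp, rfl⟩))
    · rw [Du_subset_iff]
      intro k hk
      obtain ⟨p, hp, rfl⟩ := List.mem_map.1 ((hu k).1 hk)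
      exact F_graph.2 (h1 p hp)
  · rintro ⟨u, h1, h2⟩
    have hu1 : u ≠ 1 := by
      rintro rfl
      have : (0 : ℕ) ∈ Du 1 := by
        show Nat.testBit 1 0 = true
        decide
      exact F_ne_zero (h2 this) rfl
    obtain ⟨l, g1, g2⟩ := Cont_F ((F_app hu1).1 h1) (fun ρ => rapp A ρ)
      (Cont_rapp (Cont_const A) Cont_id) (sg u) rfl
    exact g2 B fun p hp => F_graph.1 (h2 (g1 p hp))

end P3s

section P4s
/-! ### Enumerating the embedding -/

/-- Judgements: `(w, 0, x, y)` and `(w, e + 1, x, y)`. -/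
abbrev Jd : Type := List ℕ × ℕ × ℕ × ℕ

/-- The iterated applications of a program to finite relations. -/
def Th (G : ℕ → ℕ → Prop) (c0 : ℕ) : List ℕ → ℕ → ℕ → Prop
  | [] => Ev G c0
  | u :: w => rapp (Th G c0 w) (sg u)

/-- The oracle used at stage `w`. -/
def Or' (G : ℕ → ℕ → Prop) (c0 : ℕ) : List ℕ → ℕ → ℕ → Prop
  | [] => G
  | u :: w => rjoin (Th G c0 w) (sg u)

/-- Meaning of judgements. -/
def Sem (G : ℕ → ℕ → Prop) (c0 : ℕ) : Jd → Prop
  | (w, 0, x, y) => Th G c0 w x y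
  | (w, e + 1, x, y) => Ev (Or' G c0 w) e x y

def r1 (c0 : ℕ) (p : List Jd × Jd) : Prop :=
  ∃ q : ℕ × ℕ, (True) ∧ p.1 = [([], c0 + 1, q.1, q.2)] ∧
    p.2 = ([], 0, q.1, q.2)

def r2 (p : List Jd × Jd) : Prop :=
  ∃ q : ℕ × List ℕ × ℕ × ℕ × ℕ, (True) ∧ p.1 = [(q.2.1, 0, 0, q.2.2.1), (q.1 :: q.2.1, q.2.2.1 + 1, q.2.2.2.1, q.2.2.2.2)] ∧
    p.2 = (q.1 :: q.2.1, 0, q.2.2.2.1, q.2.2.2.2)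

def r3 (p : List Jd × Jd) : Prop :=
  ∃ q : List ℕ × ℕ, (True) ∧ p.1 = [] ∧
    p.2 = (q.1, 1, q.2, 0)

def r4 (p : List Jd × Jd) : Prop :=
  ∃ q : List ℕ × ℕ, (True) ∧ p.1 = [] ∧
    p.2 = (q.1, 2, q.2, q.2 + 1)

def r5 (p : List Jd × Jd) : Prop :=
  ∃ q : List ℕ × ℕ, (True) ∧ p.1 = [] ∧
    p.2 = (q.1, 3, q.2, q.2.unpair.1)

def r6 (p : List Jd × Jd) : Prop :=
  ∃ q : List ℕ × ℕ, (True) ∧ p.1 = [] ∧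
    p.2 = (q.1, 4, q.2, q.2.unpair.2)

def r7 (G : ℕ → ℕ → Prop) (p : List Jd × Jd) : Prop :=
  ∃ q : ℕ × ℕ, (G q.1 q.2) ∧ p.1 = [] ∧
    p.2 = ([], 5, q.1, q.2)

def r8 (p : List Jd × Jd) : Prop :=
  ∃ q : ℕ × List ℕ × ℕ × ℕ, (True) ∧ p.1 = [(q.2.1, 0, q.2.2.1, q.2.2.2)] ∧
    p.2 = (q.1 :: q.2.1, 5, 2 * q.2.2.1, q.2.2.2)

def r9 (p : List Jd × Jd) : Prop :=
  ∃ q : ℕ × List ℕ × ℕ × ℕ, (sg q.1 q.2.2.1 q.2.2.2) ∧ p.1 = [] ∧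
    p.2 = (q.1 :: q.2.1, 5, 2 * q.2.2.1 + 1, q.2.2.2)

def r10 (p : List Jd × Jd) : Prop :=
  ∃ q : List ℕ × ℕ × ℕ × ℕ × ℕ × ℕ, (True) ∧ p.1 = [(q.1, q.2.1 + 1, q.2.2.2.1, q.2.2.2.2.1), (q.1, q.2.2.1 + 1, q.2.2.2.1, q.2.2.2.2.2)] ∧
    p.2 = (q.1, 4 * Nat.pair q.2.1 q.2.2.1 + 5 + 1, q.2.2.2.1, Nat.pair q.2.2.2.2.1 q.2.2.2.2.2)

def r11 (p : List Jd × Jd) : Prop :=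
  ∃ q : List ℕ × ℕ × ℕ × ℕ × ℕ × ℕ, (True) ∧ p.1 = [(q.1, q.2.2.1 + 1, q.2.2.2.1, q.2.2.2.2.2), (q.1, q.2.1 + 1, q.2.2.2.2.2, q.2.2.2.2.1)] ∧
    p.2 = (q.1, 4 * Nat.pair q.2.1 q.2.2.1 + 1 + 5 + 1, q.2.2.2.1, q.2.2.2.2.1)

def r12 (p : List Jd × Jd) : Prop :=
  ∃ q : List ℕ × ℕ × ℕ × ℕ × ℕ, (True) ∧ p.1 = [(q.1, q.2.1 + 1, q.2.2.2.1, q.2.2.2.2)] ∧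
    p.2 = (q.1, 4 * Nat.pair q.2.1 q.2.2.1 + 2 + 5 + 1, Nat.pair q.2.2.2.1 0, q.2.2.2.2)

def r13 (p : List Jd × Jd) : Prop :=
  ∃ q : List ℕ × ℕ × ℕ × ℕ × ℕ × ℕ × ℕ, (True) ∧ p.1 = [(q.1, 4 * Nat.pair q.2.1 q.2.2.1 + 2 + 5 + 1, Nat.pair q.2.2.2.1 q.2.2.2.2.1, q.2.2.2.2.2.1), (q.1, q.2.2.1 + 1, Nat.pair q.2.2.2.1 (Nat.pair q.2.2.2.2.1 q.2.2.2.2.2.1), q.2.2.2.2.2.2)] ∧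
    p.2 = (q.1, 4 * Nat.pair q.2.1 q.2.2.1 + 2 + 5 + 1, Nat.pair q.2.2.2.1 (q.2.2.2.2.1 + 1), q.2.2.2.2.2.2)

def r14 (p : List Jd × Jd) : Prop :=
  ∃ q : List ℕ × ℕ × ℕ × ℕ × ℕ, (True) ∧ p.1 = [(q.1, q.2.1 + 1, Nat.pair q.2.2.2.1 q.2.2.2.2, 0)] ∧
    p.2 = (q.1, 4 * Nat.pair q.2.1 q.2.2.1 + 3 + 5 + 1, Nat.pair q.2.2.2.1 q.2.2.2.2, q.2.2.2.2)

def r15 (p : List Jd × Jd) : Prop :=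
  ∃ q : List ℕ × ℕ × ℕ × ℕ × ℕ × ℕ × ℕ, (True) ∧ p.1 = [(q.1, q.2.1 + 1, Nat.pair q.2.2.2.1 q.2.2.2.2.1, q.2.2.2.2.2.1 + 1), (q.1, 4 * Nat.pair q.2.1 q.2.2.1 + 3 + 5 + 1, Nat.pair q.2.2.2.1 (q.2.2.2.2.1 + 1), q.2.2.2.2.2.2)] ∧
    p.2 = (q.1, 4 * Nat.pair q.2.1 q.2.2.1 + 3 + 5 + 1, Nat.pair q.2.2.2.1 q.2.2.2.2.1, q.2.2.2.2.2.2)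

/-- All the rules. -/
def Rls (G : ℕ → ℕ → Prop) (c0 : ℕ) (p : List Jd × Jd) : Prop :=
  r1 c0 p ∨ r2 p ∨ r3 p ∨ r4 p ∨ r5 p ∨ r6 p ∨ r7 G p ∨ r8 p ∨
    r9 p ∨ r10 p ∨ r11 p ∨ r12 p ∨ r13 p ∨ r14 p ∨ r15 p

theorem EP_Rls {Y : Set ℕ} {G : ℕ → ℕ → Prop} (hG : EP Y (fun q : ℕ × ℕ => G q.1 q.2)) (c0 : ℕ) :
    EP Y (Rls G c0) := by
  have hT : ∀ {α : Type} [Primcodable α], EP Y (fun _ : α => True) :=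
    (EP.of_prim (Primrec.eq.comp (Primrec.const 0) (Primrec.const 0))).of_iff fun _ => by simp
  have hsg : EP Y (fun q : ℕ × List ℕ × ℕ × ℕ => sg q.1 q.2.2.1 q.2.2.2) := by
    refine EP.of_prim (primrecPred_testBit.comp Primrec.fst (Primrec₂.natPair.comp
      (Primrec₂.natPair.comp ?_ ?_) (Primrec.const 1)))
    · exact Primrec.fst.comp (Primrec.snd.comp Primrec.snd)
    · exact Primrec.snd.comp (Primrec.snd.comp Primrec.snd)
  unfold Rls
  refine EP.or (EP.rule hT ?_ ?_) (EP.or (EP.rule hT ?_ ?_) (EP.or (EP.rule hT ?_ ?_) (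
    EP.or (EP.rule hT ?_ ?_) (EP.or (EP.rule hT ?_ ?_) (EP.or (EP.rule hT ?_ ?_) (
    EP.or (EP.rule hG ?_ ?_) (EP.or (EP.rule hT ?_ ?_) (EP.or (EP.rule hsg ?_ ?_) (
    EP.or (EP.rule hT ?_ ?_) (EP.or (EP.rule hT ?_ ?_) (EP.or (EP.rule hT ?_ ?_) (
    EP.or (EP.rule hT ?_ ?_) (EP.or (EP.rule hT ?_ ?_) (EP.rule hT ?_ ?_))))))))))))))
  all_goals
    repeat' first
      | with_reducible exact Primrec.const _
      | with_reducible exact Primrec.fst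
      | with_reducible exact Primrec.snd
      | with_reducible refine Primrec.list_cons.comp ?_ ?_
      | with_reducible refine Primrec₂.natPair.comp ?_ ?_
      | with_reducible refine Primrec.nat_add.comp ?_ ?_
      | with_reducible refine Primrec.nat_mul.comp ?_ ?_
      | with_reducible refine Primrec.fst.comp ?_
      | with_reducible refine Primrec.snd.comp ?_
      | with_reducible refine Primrec.unpair.comp ?_
      | with_reducible refine Primrec.pair ?_ ?_

theorem rjoin_even (A B : ℕ → ℕ → Prop) (x y : ℕ) : rjoin A B (2 * x) y ↔ A x y := by
  have m1 : 2 * x % 2 = 0 := by omega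
  have m2 : 2 * x / 2 = x := by omega
  simp only [rjoin, m1, m2, if_true]

theorem rjoin_odd (A B : ℕ → ℕ → Prop) (x y : ℕ) : rjoin A B (2 * x + 1) y ↔ B x y := by
  have m1 : ¬ (2 * x + 1) % 2 = 0 := by omega
  have m2 : (2 * x + 1) / 2 = x := by omega
  simp only [rjoin, m1, m2, if_false]

theorem Sem_of_Clo {G : ℕ → ℕ → Prop} {c0 : ℕ} {j : Jd} (h : Clo (Rls G c0) j) :
    Sem G c0 j := by
  induction h with
  | mk ps a hr _ ih =>
    rcases hr with ⟨⟨x, y⟩, hc, e1, e2⟩ |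
      ⟨⟨u, w, e, x, y⟩, hc, e1, e2⟩ |
      ⟨⟨w, x⟩, hc, e1, e2⟩ |
      ⟨⟨w, x⟩, hc, e1, e2⟩ |
      ⟨⟨w, x⟩, hc, e1, e2⟩ |
      ⟨⟨w, x⟩, hc, e1, e2⟩ |
      ⟨⟨x, y⟩, hc, e1, e2⟩ |
      ⟨⟨u, w, x, y⟩, hc, e1, e2⟩ |
      ⟨⟨u, w, x, y⟩, hc, e1, e2⟩ |
      ⟨⟨w, a, b, x, y, z⟩, hc, e1, e2⟩ |
      ⟨⟨w, a, b, x, y, z⟩, hc, e1, e2⟩ |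
      ⟨⟨w, a, b, p, y⟩, hc, e1, e2⟩ |
      ⟨⟨w, a, b, p, n, i, y⟩, hc, e1, e2⟩ |
      ⟨⟨w, a, b, p, m⟩, hc, e1, e2⟩ |
      ⟨⟨w, a, b, p, m, z, r⟩, hc, e1, e2⟩
    · simp only at e1 e2 hc
      subst e1 e2
      have h1 := ih _ (by exact List.mem_cons_self)
      exact h1
    · simp only at e1 e2 hc
      subst e1 e2
      have h1 := ih _ (by exact List.mem_cons_self)
      have h2 := ih _ (by exact List.mem_cons_of_mem _ List.mem_cons_self)
      exact ⟨e, h1, h2⟩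
    · simp only at e1 e2 hc
      subst e1 e2
      exact Ev.zero x
    · simp only at e1 e2 hc
      subst e1 e2
      exact Ev.succ x
    · simp only at e1 e2 hc
      subst e1 e2
      exact Ev.left x
    · simp only at e1 e2 hc
      subst e1 e2
      exact Ev.right x
    · simp only at e1 e2 hc
      subst e1 e2
      exact Ev.oracle x y hc
    · simp only at e1 e2 hc
      subst e1 e2
      have h1 := ih _ (by exact List.mem_cons_self)
      exact Ev.oracle _ y ((rjoin_even _ _ x y).2 h1)
    · simp only at e1 e2 hc
      subst e1 e2
      exact Ev.oracle _ y ((rjoin_odd _ _ x y).2 hc)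
    · simp only at e1 e2 hc
      subst e1 e2
      have h1 := ih _ (by exact List.mem_cons_self)
      have h2 := ih _ (by exact List.mem_cons_of_mem _ List.mem_cons_self)
      exact Ev.pair a b x y z h1 h2
    · simp only at e1 e2 hc
      subst e1 e2
      have h1 := ih _ (by exact List.mem_cons_self)
      have h2 := ih _ (by exact List.mem_cons_of_mem _ List.mem_cons_self)
      exact Ev.comp a b x y z h1 h2
    · simp only at e1 e2 hc
      subst e1 e2
      have h1 := ih _ (by exact List.mem_cons_self)
      exact Ev.prec0 a b p y h1
    · simp only at e1 e2 hc
      subst e1 e2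
      have h1 := ih _ (by exact List.mem_cons_self)
      have h2 := ih _ (by exact List.mem_cons_of_mem _ List.mem_cons_self)
      exact Ev.precS a b p n i y h1 h2
    · simp only at e1 e2 hc
      subst e1 e2
      have h1 := ih _ (by exact List.mem_cons_self)
      exact Ev.rfind0 a b p m h1
    · simp only at e1 e2 hc
      subst e1 e2
      have h1 := ih _ (by exact List.mem_cons_self)
      have h2 := ih _ (by exact List.mem_cons_of_mem _ List.mem_cons_self)
      exact Ev.rfindS a b p m z r h1 h2

theorem Clo_of_Ev {G : ℕ → ℕ → Prop} {c0 : ℕ} {w : List ℕ}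
    (hO : ∀ x y, Or' G c0 w x y → Clo (Rls G c0) (w, 5, x, y)) {e x y : ℕ}
    (h : Ev (Or' G c0 w) e x y) : Clo (Rls G c0) (w, e + 1, x, y) := by
  induction h with
  | zero x =>
    exact Clo.mk _ _ (Or.inr (Or.inr (Or.inl ⟨(w, x), trivial, rfl, rfl⟩)))
      (fun _ h => absurd h List.not_mem_nil)
  | succ x =>
    exact Clo.mk _ _ (Or.inr (Or.inr (Or.inr (Or.inl ⟨(w, x), trivial, rfl, rfl⟩))))
      (fun _ h => absurd h List.not_mem_nil)
  | left x =>
    exact Clo.mk _ _ (Or.inr (Or.inr (Or.inr (Or.inr (Or.inl ⟨(w, x), trivial, rfl, rfl⟩)))))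
      (fun _ h => absurd h List.not_mem_nil)
  | right x =>
    exact Clo.mk _ _ (Or.inr (Or.inr (Or.inr (Or.inr (Or.inr (Or.inl ⟨(w, x), trivial, rfl, rfl⟩))))))
      (fun _ h => absurd h List.not_mem_nil)
  | oracle x y h => exact hO x y h
  | pair a b x y z _ _ h1 h2 =>
    exact Clo.mk _ _ (Or.inr (Or.inr (Or.inr (Or.inr (Or.inr (Or.inr (Or.inr (Or.inr (Or.inr (Or.inl ⟨(w, a, b, x, y, z), trivial, rfl, rfl⟩))))))))))
      (List.forall_mem_cons.2 ⟨h1, List.forall_mem_singleton.2 h2⟩)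
  | comp a b x y z _ _ h1 h2 =>
    exact Clo.mk _ _ (Or.inr (Or.inr (Or.inr (Or.inr (Or.inr (Or.inr (Or.inr (Or.inr (Or.inr (Or.inr (Or.inl ⟨(w, a, b, x, y, z), trivial, rfl, rfl⟩)))))))))))
      (List.forall_mem_cons.2 ⟨h1, List.forall_mem_singleton.2 h2⟩)
  | prec0 a b p y _ h1 =>
    exact Clo.mk _ _ (Or.inr (Or.inr (Or.inr (Or.inr (Or.inr (Or.inr (Or.inr (Or.inr (Or.inr (Or.inr (Or.inr (Or.inl ⟨(w, a, b, p, y), trivial, rfl, rfl⟩))))))))))))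
      (List.forall_mem_singleton.2 h1)
  | precS a b p n i y _ _ h1 h2 =>
    exact Clo.mk _ _ (Or.inr (Or.inr (Or.inr (Or.inr (Or.inr (Or.inr (Or.inr (Or.inr (Or.inr (Or.inr (Or.inr (Or.inr (Or.inl ⟨(w, a, b, p, n, i, y), trivial, rfl, rfl⟩)))))))))))))
      (List.forall_mem_cons.2 ⟨h1, List.forall_mem_singleton.2 h2⟩)
  | rfind0 a b p m _ h1 =>
    exact Clo.mk _ _ (Or.inr (Or.inr (Or.inr (Or.inr (Or.inr (Or.inr (Or.inr (Or.inr (Or.inr (Or.inr (Or.inr (Or.inr (Or.inr (Or.inl ⟨(w, a, b, p, m), trivial, rfl, rfl⟩))))))))))))))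
      (List.forall_mem_singleton.2 h1)
  | rfindS a b p m z r _ _ h1 h2 =>
    exact Clo.mk _ _ (Or.inr (Or.inr (Or.inr (Or.inr (Or.inr (Or.inr (Or.inr (Or.inr (Or.inr (Or.inr (Or.inr (Or.inr (Or.inr (Or.inr (⟨(w, a, b, p, m, z, r), trivial, rfl, rfl⟩)))))))))))))))
      (List.forall_mem_cons.2 ⟨h1, List.forall_mem_singleton.2 h2⟩)

theorem Clo_of_Th {G : ℕ → ℕ → Prop} {c0 : ℕ} (w : List ℕ) :
    ∀ x y, Th G c0 w x y → Clo (Rls G c0) (w, 0, x, y) := by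
  induction w with
  | nil =>
    intro x y h
    have h1 : Clo (Rls G c0) ([], c0 + 1, x, y) := by
      refine Clo_of_Ev (w := []) (fun x y hc => ?_) h
      exact Clo.mk _ _ (Or.inr (Or.inr (Or.inr (Or.inr (Or.inr (Or.inr (Or.inl ⟨(x, y), hc, rfl, rfl⟩)))))))
        (fun _ h => absurd h List.not_mem_nil)
    exact Clo.mk _ _ (Or.inl ⟨(x, y), trivial, rfl, rfl⟩)
      (List.forall_mem_singleton.2 h1)
  | cons u w ih =>
    rintro x y ⟨e, h1, h2⟩
    have h1 := ih 0 e h1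
    have h2 : Clo (Rls G c0) (u :: w, e + 1, x, y) := by
      refine Clo_of_Ev (w := u :: w) (fun x y hc => ?_) h2
      rcases Nat.even_or_odd' x with ⟨x, rfl | rfl⟩
      · have h1 := ih x y ((rjoin_even _ _ x y).1 hc)
        exact Clo.mk _ _ (Or.inr (Or.inr (Or.inr (Or.inr (Or.inr (Or.inr (Or.inr (Or.inl ⟨(u, w, x, y), trivial, rfl, rfl⟩))))))))
          (List.forall_mem_singleton.2 h1)
      · have hc := (rjoin_odd _ _ x y).1 hc
        exact Clo.mk _ _ (Or.inr (Or.inr (Or.inr (Or.inr (Or.inr (Or.inr (Or.inr (Or.inr (Or.inl ⟨(u, w, x, y), hc, rfl, rfl⟩)))))))))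
          (fun _ h => absurd h List.not_mem_nil)
    exact Clo.mk _ _ (Or.inr (Or.inl ⟨(u, w, e, x, y), trivial, rfl, rfl⟩))
      (List.forall_mem_cons.2 ⟨h1, List.forall_mem_singleton.2 h2⟩)

theorem EP_Th {Y : Set ℕ} {G : ℕ → ℕ → Prop} (hG : EP Y (fun q : ℕ × ℕ => G q.1 q.2)) (c0 : ℕ) :
    EP Y (fun z : List ℕ × ℕ × ℕ => Th G c0 z.1 z.2.1 z.2.2) := by
  have h := (EP_Rls hG c0).clo.comp (f := fun z : List ℕ × ℕ × ℕ => ((z.1, 0, z.2) : Jd))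
    (Primrec.pair Primrec.fst (Primrec.pair (Primrec.const 0) Primrec.snd))
  refine h.of_iff fun z => ⟨fun h => ?_, fun h => Clo_of_Th _ _ _ h⟩
  exact Sem_of_Clo h

/-- Rules generating the embedding. -/
def Rf (T : List ℕ → ℕ → ℕ → Prop) (p : List (List ℕ × ℕ) × (List ℕ × ℕ)) : Prop :=
  (∃ q : List ℕ × ℕ × ℕ, T q.1 q.2.1 q.2.2 ∧ p.1 = [] ∧
    p.2 = (q.1, Nat.pair (Nat.pair q.2.1 q.2.2) 1)) ∨
  ∃ q : List ℕ × ℕ × ℕ, (¬ q.2.2 = 1) ∧ p.1 = [(q.2.2 :: q.1, q.2.1)] ∧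
    p.2 = (q.1, Nat.pair q.2.1 q.2.2)

theorem EP_Rf {Y : Set ℕ} {T : List ℕ → ℕ → ℕ → Prop}
    (hT : EP Y (fun z : List ℕ × ℕ × ℕ => T z.1 z.2.1 z.2.2)) : EP Y (Rf T) := by
  have hne : EP Y (fun q : List ℕ × ℕ × ℕ => ¬ q.2.2 = 1) :=
    EP.of_prim (Primrec.eq.comp (Primrec.snd.comp Primrec.snd) (Primrec.const 1)).not
  unfold Rf
  refine EP.or (EP.rule hT ?_ ?_) (EP.rule hne ?_ ?_)
  all_goals
    repeat' first
      | with_reducible exact Primrec.const _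
      | with_reducible exact Primrec.fst
      | with_reducible exact Primrec.snd
      | with_reducible refine Primrec.list_cons.comp ?_ ?_
      | with_reducible refine Primrec₂.natPair.comp ?_ ?_
      | with_reducible refine Primrec.nat_add.comp ?_ ?_
      | with_reducible refine Primrec.nat_mul.comp ?_ ?_
      | with_reducible refine Primrec.fst.comp ?_
      | with_reducible refine Primrec.snd.comp ?_
      | with_reducible refine Primrec.unpair.comp ?_
      | with_reducible refine Primrec.pair ?_ ?_

theorem F_of_Clo {G : ℕ → ℕ → Prop} {c0 : ℕ} {j : List ℕ × ℕ} (h : Clo (Rf (Th G c0)) j) :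
    F (Th G c0 j.1) j.2 := by
  induction h with
  | mk ps a hr _ ih =>
    rcases hr with ⟨⟨w, x, y⟩, hc, e1, e2⟩ | ⟨⟨w, n, u⟩, hc, e1, e2⟩
    · simp only at e1 e2 hc
      subst e1 e2
      exact F.graph _ x y hc
    · simp only at e1 e2 hc
      subst e1 e2
      exact F.app _ n u hc (ih _ List.mem_cons_self)

theorem Clo_of_F {G : ℕ → ℕ → Prop} {c0 : ℕ} {A : ℕ → ℕ → Prop} {n : ℕ} (h : F A n) :
    ∀ w, A = Th G c0 w → Clo (Rf (Th G c0)) (w, n) := by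
  induction h with
  | graph A x y h =>
    rintro w rfl
    exact Clo.mk _ _ (Or.inl ⟨(w, x, y), h, rfl, rfl⟩) (fun _ h => absurd h List.not_mem_nil)
  | app A n u hu _ ih =>
    rintro w rfl
    exact Clo.mk _ _ (Or.inr ⟨(w, n, u), hu, rfl, rfl⟩)
      (List.forall_mem_singleton.2 (ih (u :: w) rfl))

theorem EP_F {Y : Set ℕ} {G : ℕ → ℕ → Prop} (hG : EP Y (fun q : ℕ × ℕ => G q.1 q.2)) (c0 : ℕ) :
    EP Y (fun n => F (Ev G c0) n) := by
  have h := (EP_Rf (EP_Th hG c0)).clo.comp (f := fun n : ℕ => (([], n) : List ℕ × ℕ))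
    (Primrec.pair (Primrec.const []) Primrec.id)
  exact h.of_iff fun n => ⟨fun h => F_of_Clo h, fun h => Clo_of_F h [] rfl⟩

theorem EP_chi {X Y : Set ℕ} (h : EnumLE (joinCompl X) Y) :
    EP Y (fun q : ℕ × ℕ => gr (chi X) q.1 q.2) := by
  have hJ := EP_of_EnumLE h
  have h1 : EP Y (fun q : ℕ × ℕ => (q.2 = 1 ∧ 2 * q.1 ∈ joinCompl X) ∨
      (q.2 = 0 ∧ 2 * q.1 + 1 ∈ joinCompl X)) := by
    refine EP.or (EP.and (EP.of_prim (Primrec.eq.comp Primrec.snd (Primrec.const 1)))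
      (hJ.comp (Primrec.nat_double.comp Primrec.fst)))
      (EP.and (EP.of_prim (Primrec.eq.comp Primrec.snd (Primrec.const 0)))
      (hJ.comp (Primrec.nat_double_succ.comp Primrec.fst)))
  refine h1.of_iff fun q => ?_
  obtain ⟨x, y⟩ := q
  have e1 : 2 * x ∈ joinCompl X ↔ x ∈ X := by
    constructor
    · rintro ⟨n, ⟨h, hn⟩ | ⟨h, hn⟩⟩
      · rwa [show x = n by omega]
      · omega
    · exact fun h => ⟨x, Or.inl ⟨rfl, h⟩⟩
  have e2 : 2 * x + 1 ∈ joinCompl X ↔ x ∉ X := by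
    constructor
    · rintro ⟨n, ⟨h, hn⟩ | ⟨h, hn⟩⟩
      · omega
      · rwa [show x = n by omega]
    · exact fun h => ⟨x, Or.inr ⟨rfl, h⟩⟩
  simp only [e1, e2]
  have e3 : gr (chi X) x y ↔ y = X.indicator (fun _ => 1) x := Part.mem_some_iff
  rw [e3]
  by_cases hx : x ∈ X <;> simp [hx]

theorem EnumLE_F {X Y : Set ℕ} (h : EnumLE (joinCompl X) Y) (θ : Bel X) :
    EnumLE {n | F (gr θ.1) n} Y := by
  obtain ⟨θ, c, rfl⟩ := θ
  obtain ⟨e, rfl⟩ := ofNat_surj c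
  apply EnumLE_of_EP
  refine (EP_F (EP_chi h) e).of_iff fun n => ?_
  have : Ev (gr (chi X)) e = gr (evalo (chi X) (OCode.ofNat e)) := by
    funext x y
    exact propext Ev_iff.symm
  rw [this]
  rfl

theorem backward (X Y : Set ℕ) (h : EnumLE (joinCompl X) Y) :
    ∃ f : Bel X → Gel Y, IsPCAEmbedding (bXApp X) (gXApp Y) f := by
  refine ⟨fun θ => ⟨{n | F (gr θ.1) n}, EnumLE_F h θ⟩, ?_, ?_⟩
  · intro a b hab
    have hab : {n | F (gr a.1) n} = {n | F (gr b.1) n} := congrArg Subtype.val hab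
    refine Subtype.ext (funext fun x => Part.ext fun y => ?_)
    have := Set.ext_iff.1 hab (Nat.pair (Nat.pair x y) 1)
    exact F_graph.symm.trans (Iff.trans this F_graph)
  · intro a b c hc
    refine mem_gXApp.2 ?_
    have e := mem_bXApp.1 hc
    ext n
    show F (gr c.1) n ↔ ∃ u, F (gr a.1) (Nat.pair n u) ∧ Du u ⊆ {n | F (gr b.1) n}
    rw [e, gr_app]
    exact F_rapp _ _ n

end P4s

theorem stmt18 (X Y : Set ℕ) :
    (∃ f : Bel X → Gel Y, IsPCAEmbedding (bXApp X) (gXApp Y) f) ↔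
      EnumLE (joinCompl X) Y := by
  exact ⟨fun ⟨f, hf⟩ => forward X Y f hf, backward X Y⟩

end PCAEmb
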